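/- arXiv:1002.2866 — 3 statements merged into one kernel-verified Lean document; each statement's English description precedes it below -/
import Mathlib

section
/- Let G : ℝ² → ℝ² be a lift of a homeomorphism g of the two-torus homotopic to the identity, let Û ⊆ ℝ² be bounded and connected with G(Û) ∩ Û ≠ ∅, let λ ≠ 0, v ∈ ℝ² \ {0} and a < b. If ρ_Û(G) = L_{λ,v}[a,b], then the full rotation set satisfies ρ(G) = L_{λ,v}[a,b]. -/
noncomputable section
open Filter Topology Metric Set MeasureTheory

/-- Euclidean space `ℝ^d`. -/
abbrev E (d : ℕ) := EuclideanSpace ℝ (Fin d)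

/-- The integer lattice `ℤ^d` as an additive subgroup of `ℝ^d`. -/
def ZLat (d : ℕ) : AddSubgroup (E d) where
  carrier := {z | ∀ i, ∃ m : ℤ, z i = (m : ℝ)}
  zero_mem' := fun i => ⟨0, by simp⟩
  add_mem' := by
    intro x y hx hy i
    obtain ⟨m, hm⟩ := hx i
    obtain ⟨n, hn⟩ := hy i
    exact ⟨m + n, by simp [PiLp.add_apply, hm, hn]⟩
  neg_mem' := by
    intro x hx i
    obtain ⟨m, hm⟩ := hx i
    exact ⟨-m, by simp [PiLp.neg_apply, hm]⟩

/-- The torus `T^d = ℝ^d / ℤ^d`. -/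
abbrev T (d : ℕ) := E d ⧸ ZLat d

/-- The canonical projection `π : ℝ^d → T^d`. -/
def tpi (d : ℕ) : E d → T d := QuotientAddGroup.mk

/-- The set of rotation vectors of orbit segments starting in `W ⊆ ℝ^d`:
`{ρ | ∃ nᵢ → ∞, zᵢ ∈ W, (F^{nᵢ}(zᵢ) - zᵢ)/nᵢ → ρ}`. -/
def rotRel {d : ℕ} (F : E d → E d) (W : Set (E d)) : Set (E d) :=
  {ρ | ∃ (n : ℕ → ℕ) (z : ℕ → E d),
    Tendsto n atTop atTop ∧ (∀ i, z i ∈ W) ∧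
    Tendsto (fun i => (n i : ℝ)⁻¹ • (F^[n i] (z i) - z i)) atTop (𝓝 ρ)}

/-- The Misiurewicz–Ziemian rotation set `ρ(F)` of a lift `F`. -/
def rotSet {d : ℕ} (F : E d → E d) : Set (E d) := rotRel F Set.univ

/-- The rotation subset `ρ_U(F)` for `U ⊆ T^d` (starting points in `π⁻¹(U)`). -/
def rotU {d : ℕ} (F : E d → E d) (U : Set (T d)) : Set (E d) :=
  rotRel F (tpi d ⁻¹' U)

/-- `F` is a lift of the torus homeomorphism `f` (which is then homotopic to the
identity, as expressed by commutation with the deck translations). -/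
def IsLift {d : ℕ} (F : E d ≃ₜ E d) (f : T d ≃ₜ T d) : Prop :=
  (∀ z : E d, tpi d (F z) = f (tpi d z)) ∧ ∀ z : E d, ∀ m ∈ ZLat d, F (z + m) = F z + m

/-- `U ⊆ T^d` is bounded: the connected components of `π⁻¹(U)` are bounded. -/
def BoundedSet {d : ℕ} (U : Set (T d)) : Prop :=
  ∀ z ∈ tpi d ⁻¹' U, Bornology.IsBounded (connectedComponentIn (tpi d ⁻¹' U) z)

/-- `U ⊆ T^d` is recurrent: `f^n(U) ∩ U ≠ ∅` for infinitely many `n ≥ 1`. -/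
def Recurrent {d : ℕ} (f : T d ≃ₜ T d) (U : Set (T d)) : Prop :=
  {n : ℕ | 1 ≤ n ∧ ((⇑f)^[n] '' U ∩ U).Nonempty}.Infinite

/-- The Euclidean scalar product `⟨z, v⟩` in `ℝ²`. -/
def sdot (v z : E 2) : ℝ := z 0 * v 0 + z 1 * v 1

/-- `⟨z, v^⊥⟩` where `v^⊥ = (-v₂, v₁)`. -/
def pdot (v z : E 2) : ℝ := z 1 * v 0 - z 0 * v 1

/-- The affine line `L_{λ,v} = λv + {v}^⊥ = {z | ⟨z,v⟩ = λ⟨v,v⟩}`. -/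
def lineL (lam : ℝ) (v : E 2) : Set (E 2) := {z | sdot v z = lam * sdot v v}

/-- A vector of `ℝ²` is rational if both coordinates are rational. -/
def RatVec (z : E 2) : Prop := (∃ q : ℚ, z 0 = (q : ℝ)) ∧ ∃ q : ℚ, z 1 = (q : ℝ)

/-- The segment `L_{λ,v}[a,b] = {z ∈ L_{λ,v} | a⟨z,v⟩ ≤ ⟨z,v^⊥⟩ ≤ b⟨z,v⟩}`. -/
def lineSeg (lam : ℝ) (v : E 2) (a b : ℝ) : Set (E 2) :=
  {z ∈ lineL lam v | a * sdot v z ≤ pdot v z ∧ pdot v z ≤ b * sdot v z}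

/-- The cone `C_v[a,b] = {z | a⟨z,v⟩ ≤ ⟨z,v^⊥⟩ ≤ b⟨z,v⟩}`. -/
def coneC (v : E 2) (a b : ℝ) : Set (E 2) :=
  {z | a * sdot v z ≤ pdot v z ∧ pdot v z ≤ b * sdot v z}


theorem exp_const_aux (h : ℝ → ℂ) (hc : Continuous h)
    (he : ∀ t, Complex.exp (h t) = Complex.exp (h 0)) (t : ℝ) : h t = h 0 := by
  have := Complex.isCoveringMap_exp.eq_of_comp_eq (g₁ := h) (g₂ := fun _ => h 0) hc
    continuous_const (by ext t; simpa using he t) 0 rfl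
  exact congrFun this t

theorem log_change (θ f : ℝ → ℂ) (u : ℂ) (hθ : Continuous θ) (hf : Continuous f)
    (he : ∀ t, Complex.exp (θ t) = f t) (hs : ∀ t, u * f t ∈ Complex.slitPlane) :
    θ 1 - θ 0 = Complex.log (u * f 1) - Complex.log (u * f 0) := by
  have hc : Continuous (fun t => θ t - Complex.log (u * f t)) :=
    hθ.sub ((continuous_const.mul hf).clog hs)
  have h0 : ∀ t, Complex.exp (θ t - Complex.log (u * f t)) = u⁻¹ := by
    intro t
    have h1 := Complex.slitPlane_ne_zero (hs t)
    rw [Complex.exp_sub, Complex.exp_log h1, he]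
    have hu : u ≠ 0 := left_ne_zero_of_mul h1
    have hf0 : f t ≠ 0 := right_ne_zero_of_mul h1
    field_simp
  have := exp_const_aux _ hc (fun t => by rw [h0, h0]) 1
  linear_combination this

theorem exists_log_lift (F : ℝ × ℝ → ℂ) (hF : Continuous F) (h0 : ∀ x, F x ≠ 0) :
    ∃ θ : ℝ × ℝ → ℂ, Continuous θ ∧ ∀ x, Complex.exp (θ x) = F x := by
  obtain ⟨θ, ⟨-, h⟩, -⟩ := Complex.isCoveringMapOn_exp.existsUnique_continuousMap_lifts
    (⟨F, hF⟩ : C(ℝ × ℝ, ℂ)) (a₀ := (0, 0)) (e₀ := Complex.log (F (0, 0)))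
    (Complex.exp_log (h0 _)) (fun x => h0 x)
  exact ⟨θ, θ.continuous, fun x => congrFun h x⟩

theorem path_in_open (K O : Set ℂ) (hK : IsPreconnected K) (hO : IsOpen O) (hKO : K ⊆ O)
    (p q : ℂ) (hp : p ∈ K) (hq : q ∈ K) :
    ∃ γ : ℝ → ℂ, Continuous γ ∧ γ 0 = p ∧ γ 1 = q ∧ ∀ t, γ t ∈ O := by
  have h1 : IsConnected (connectedComponentIn O p) :=
    isConnected_connectedComponentIn_iff.2 (hKO hp)
  have h2 := (hO.connectedComponentIn (x := p)).isConnected_iff_isPathConnected.1 h1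
  have h3 := hK.subset_connectedComponentIn hp hKO
  have h4 := h2.joinedIn p (h3 hp) q (h3 hq)
  refine ⟨h4.somePath.extend, h4.somePath.continuous_extend, by simp, by simp, fun t => ?_⟩
  exact connectedComponentIn_subset O p (h4.somePath_mem (projIcc 0 1 zero_le_one t))

theorem log_neg_diff (z w : ℂ) (hz : z.im < 0) (hw : 0 < w.im)
    (h : Complex.log w - Complex.log z = Complex.log (-w) - Complex.log (-z)) : False := by
  have := congrArg Complex.im h
  simp only [Complex.sub_im, Complex.log_im] at this
  rw [Complex.arg_neg_eq_arg_sub_pi_of_im_pos hw, Complex.arg_neg_eq_arg_add_pi_of_im_neg hz] at this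
  linarith [Real.pi_pos]

theorem cross_lemma (A B : Set ℂ) (hA : IsCompact A) (hB : IsCompact B)
    (hAc : IsPreconnected A) (hBc : IsPreconnected B) (hd : Disjoint A B)
    (q1 q2 r1 r2 : ℂ) (hq1 : q1 ∈ A) (hq2 : q2 ∈ A) (hr1 : r1 ∈ B) (hr2 : r2 ∈ B)
    (h1 : ∀ z ∈ A, r1 - z ∈ Complex.slitPlane) (h2 : ∀ z ∈ B, z - q1 ∈ Complex.slitPlane)
    (h3 : ∀ z ∈ A, z - r2 ∈ Complex.slitPlane) (h4 : ∀ z ∈ B, q2 - z ∈ Complex.slitPlane)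
    (h5 : (r1 - q2).im < 0) (h6 : 0 < (r2 - q1).im) : False := by
  obtain ⟨U, V, hU, hV, hAU, hBV, hUV⟩ := SeparatedNhds.of_isCompact_isCompact hA hB hd
  have hS := Complex.isOpen_slitPlane
  obtain ⟨α, hα, hα0, hα1, hαm⟩ := path_in_open A
    (U ∩ ((fun z => r1 - z) ⁻¹' Complex.slitPlane ∩ (fun z => z - r2) ⁻¹' Complex.slitPlane)) hAc
    (hU.inter ((hS.preimage (by fun_prop)).inter (hS.preimage (by fun_prop))))
    (fun z hz => ⟨hAU hz, h1 z hz, h3 z hz⟩) q1 q2 hq1 hq2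
  obtain ⟨β, hβ, hβ0, hβ1, hβm⟩ := path_in_open B
    (V ∩ ((fun z => z - q1) ⁻¹' Complex.slitPlane ∩ (fun z => q2 - z) ⁻¹' Complex.slitPlane)) hBc
    (hV.inter ((hS.preimage (by fun_prop)).inter (hS.preimage (by fun_prop))))
    (fun z hz => ⟨hBV hz, h2 z hz, h4 z hz⟩) r1 r2 hr1 hr2
  obtain ⟨θ, hθ, he⟩ := exists_log_lift (fun x => β x.1 - α x.2) (by fun_prop) (by
    intro x h
    have h' : β x.1 = α x.2 := sub_eq_zero.1 h
    exact Set.disjoint_left.1 hUV (hαm x.2).1 (h' ▸ (hβm x.1).1))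
  have e1 := log_change (fun t => θ (0, t)) (fun t => β 0 - α t) 1 (by fun_prop) (by fun_prop)
    (fun t => he _) (fun t => by rw [hβ0, one_mul]; exact (hαm t).2.1)
  have e2 := log_change (fun t => θ (t, 0)) (fun t => β t - α 0) 1 (by fun_prop) (by fun_prop)
    (fun t => he _) (fun t => by rw [hα0, one_mul]; exact (hβm t).2.1)
  have e3 := log_change (fun t => θ (1, t)) (fun t => β 1 - α t) (-1) (by fun_prop) (by fun_prop)
    (fun t => he _) (fun t => by
      rw [hβ1, neg_one_mul, neg_sub]; exact (hαm t).2.2)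
  have e4 := log_change (fun t => θ (t, 1)) (fun t => β t - α 1) (-1) (by fun_prop) (by fun_prop)
    (fun t => he _) (fun t => by
      rw [hα1, neg_one_mul, neg_sub]; exact (hβm t).2.2)
  simp only [hα0, hα1, hβ0, hβ1, one_mul, neg_one_mul] at e1 e2 e3 e4
  exact log_neg_diff _ _ h5 h6 (by linear_combination e1 - e2 - e3 + e4)

theorem wind_lemma (K1 K2 : Set ℂ) (hK1 : IsPreconnected K1) (hK2 : IsPreconnected K2)
    (p q : ℂ) (hp1 : p ∈ K1) (hp2 : p ∈ K2) (hq1 : q ∈ K1) (hq2 : q ∈ K2)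
    (w w' : ℂ) (P : Path w w') (hP1 : ∀ t, P t ∉ K1) (hP2 : ∀ t, P t ∉ K2)
    (h1 : ∀ z ∈ K1, z - w ∈ Complex.slitPlane) (h2 : ∀ z ∈ K2, w - z ∈ Complex.slitPlane)
    (h3 : (p - w).im < 0) (h4 : 0 < (q - w).im)
    (h5 : ∀ z ∈ K1, ‖z‖ < ‖w'‖) (h6 : ∀ z ∈ K2, ‖z‖ < ‖w'‖) : False := by
  have hS := Complex.isOpen_slitPlane
  have hPc : IsOpen (Set.range P)ᶜ := (isCompact_range P.continuous).isClosed.isOpen_compl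
  obtain ⟨α, hα, hα0, hα1, hαm⟩ := path_in_open K1
    ((Set.range P)ᶜ ∩ ((fun z => z - w) ⁻¹' Complex.slitPlane ∩ {z | ‖z‖ < ‖w'‖})) hK1
    (hPc.inter ((hS.preimage (by fun_prop)).inter (isOpen_lt (by fun_prop) (by fun_prop))))
    (fun z hz => ⟨by rintro ⟨t, rfl⟩; exact hP1 t hz, h1 z hz, h5 z hz⟩) p q hp1 hq1
  obtain ⟨β, hβ, hβ0, hβ1, hβm⟩ := path_in_open K2
    ((Set.range P)ᶜ ∩ ((fun z => w - z) ⁻¹' Complex.slitPlane ∩ {z | ‖z‖ < ‖w'‖})) hK2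
    (hPc.inter ((hS.preimage (by fun_prop)).inter (isOpen_lt (by fun_prop) (by fun_prop))))
    (fun z hz => ⟨by rintro ⟨t, rfl⟩; exact hP2 t hz, h2 z hz, h6 z hz⟩) p q hp2 hq2
  have hPe : ∀ r, P.extend r ∈ Set.range P := fun r => ⟨projIcc 0 1 zero_le_one r, rfl⟩
  have hPC : Continuous P.extend := P.continuous_extend
  obtain ⟨θ, hθ, he⟩ := exists_log_lift (fun x => α x.2 - P.extend x.1) (by fun_prop) (by
    intro x h
    have h' : α x.2 = P.extend x.1 := sub_eq_zero.1 h
    exact (hαm x.2).1 (h' ▸ hPe _))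
  obtain ⟨η, hη, he'⟩ := exists_log_lift (fun x => β x.2 - P.extend x.1) (by fun_prop) (by
    intro x h
    have h' : β x.2 = P.extend x.1 := sub_eq_zero.1 h
    exact (hβm x.2).1 (h' ▸ hPe _))
  have hE := exp_const_aux (fun r => (θ (r, 1) - θ (r, 0)) - (η (r, 1) - η (r, 0)))
    (by fun_prop) (by
      have : ∀ r, Complex.exp ((θ (r, 1) - θ (r, 0)) - (η (r, 1) - η (r, 0))) = 1 := by
        intro r
        have n1 := Complex.exp_ne_zero (η (r, 0))
        have n2 := Complex.exp_ne_zero (η (r, 1))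
        simp only [Complex.exp_sub]
        have k1 : Complex.exp (θ (r, 1)) = Complex.exp (η (r, 1)) := by
          rw [he, he']; simp [hα1, hβ1]
        have k2 : Complex.exp (θ (r, 0)) = Complex.exp (η (r, 0)) := by
          rw [he, he']; simp [hα0, hβ0]
        rw [k1, k2]
        field_simp
      intro r
      rw [this, this]) 1
  have hre : ∀ z : ℂ, ‖z‖ < ‖w'‖ → -(starRingEnd ℂ w') * (z - w') ∈ Complex.slitPlane := by
    intro z hz
    left
    have e : (-(starRingEnd ℂ w') * (z - w')).re = ‖w'‖ ^ 2 - ((starRingEnd ℂ w') * z).re := by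
      rw [← Complex.normSq_eq_norm_sq, Complex.normSq_apply]
      simp; ring
    have l := Complex.re_le_norm ((starRingEnd ℂ w') * z)
    rw [norm_mul, RCLike.norm_conj] at l
    rw [e]
    nlinarith [norm_nonneg z]
  have a0 := log_change (fun t => θ (0, t)) (fun t => α t - P.extend 0) 1 (by fun_prop)
    (by fun_prop) (fun t => he _) (fun t => by simpa using (hαm t).2.1)
  have b0 := log_change (fun t => η (0, t)) (fun t => β t - P.extend 0) (-1) (by fun_prop)
    (by fun_prop) (fun t => he' _) (fun t => by simpa using (hβm t).2.1)
  have a1 := log_change (fun t => θ (1, t)) (fun t => α t - P.extend 1) (-(starRingEnd ℂ w'))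
    (by fun_prop) (by fun_prop) (fun t => he _)
    (fun t => by rw [P.extend_one]; exact hre _ (hαm t).2.2)
  have b1 := log_change (fun t => η (1, t)) (fun t => β t - P.extend 1) (-(starRingEnd ℂ w'))
    (by fun_prop) (by fun_prop) (fun t => he' _)
    (fun t => by rw [P.extend_one]; exact hre _ (hβm t).2.2)
  simp only [hα0, hα1, hβ0, hβ1, one_mul, neg_one_mul, P.extend_zero, P.extend_one]
    at a0 b0 a1 b1 hE
  exact log_neg_diff _ _ h3 h4 (by linear_combination -hE - a0 + b0 + a1 - b1)

/-- The union of the iterates `G^j(K)` for `n ≤ j ≤ m`. -/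
def orbU (G : E 2 → E 2) (K : Set (E 2)) (n m : ℕ) : Set (E 2) :=
  ⋃ j ∈ Set.Icc n m, (G^[j]) '' K

theorem mem_orbU {G : E 2 → E 2} {K : Set (E 2)} {n m : ℕ} {y : E 2} :
    y ∈ orbU G K n m ↔ ∃ j, n ≤ j ∧ j ≤ m ∧ ∃ z ∈ K, G^[j] z = y := by
  simp only [orbU, Set.mem_iUnion, Set.mem_image, Set.mem_Icc, exists_prop, and_assoc]

theorem orbU_compact {G : E 2 → E 2} (hG : Continuous G) {K : Set (E 2)} (hK : IsCompact K)
    (n m : ℕ) : IsCompact (orbU G K n m) :=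
  (Set.finite_Icc n m).isCompact_biUnion fun j _ => hK.image (hG.iterate j)

theorem orbU_preconn {G : E 2 → E 2} (hG : Continuous G) {K : Set (E 2)} (hK : IsPreconnected K)
    (hm : (G '' K ∩ K).Nonempty) (n m : ℕ) : IsPreconnected (orbU G K n m) := by
  refine IsPreconnected.biUnion_of_chain Set.ordConnected_Icc
    (fun j _ => hK.image _ (hG.iterate j).continuousOn) fun j _ _ => ?_
  obtain ⟨y, ⟨z, hz, rfl⟩, hy⟩ := hm
  refine ⟨G^[j] (G z), ⟨G z, hy, rfl⟩, ⟨z, hz, ?_⟩⟩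
  exact Function.iterate_succ_apply G j z

/-- Real-linear coordinates with values in `ℂ`. -/
def cplx (x h : E 2 →L[ℝ] ℝ) : E 2 → ℂ := fun z => ⟨x z, h z⟩

theorem cplx_cont (x h : E 2 →L[ℝ] ℝ) : Continuous (cplx x h) := by
  have : cplx x h = fun z => (x z : ℂ) + (h z : ℂ) * Complex.I := by
    ext z; apply Complex.ext <;> simp [cplx]
  rw [this]; fun_prop

theorem slit_of_nonneg {z : ℂ} (h : 0 ≤ z.re) (h0 : z ≠ 0) : z ∈ Complex.slitPlane := by
  by_contra hc
  rw [Complex.mem_slitPlane_iff, not_or, not_not, not_lt] at hc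
  exact h0 (Complex.ext (le_antisymm hc.1 h) hc.2)

theorem cplx_inj {x h : E 2 →L[ℝ] ℝ} (hinj : ∀ z, x z = 0 → h z = 0 → z = 0) :
    Function.Injective (cplx x h) := by
  intro y z e
  have e1 := congrArg Complex.re e
  have e2 := congrArg Complex.im e
  simp only [cplx] at e1 e2
  exact sub_eq_zero.1 (hinj _ (by rw [map_sub, e1, sub_self]) (by rw [map_sub, e2, sub_self]))

theorem dyn_cross (G : E 2 → E 2) (hG : Continuous G) (K : Set (E 2)) (hK : IsCompact K)
    (hKc : IsPreconnected K) (hm : (G '' K ∩ K).Nonempty)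
    (x h : E 2 →L[ℝ] ℝ) (hinj : ∀ z, x z = 0 → h z = 0 → z = 0)
    (S : E 2) (hxS : x S = 0) (hhS : 0 < h S)
    (hup : ∀ B : ℝ, ∃ n, ∃ z ∈ K, B < x (G^[n] z))
    (hdn : ∀ B : ℝ, ∃ n, ∃ z ∈ K, x (G^[n] z) < B)
    (hh : ∀ B : ℝ, ∃ N, ∀ n ≥ N, ∀ z ∈ K, B < h (G^[n] z)) :
    ∃ n, ∃ y ∈ orbU G K 0 n, y + S ∈ orbU G K 0 n := by
  classical
  have hKn : K.Nonempty := hm.mono Set.inter_subset_right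
  obtain ⟨x0, hx0⟩ := hKn
  have hne : ∀ n, (orbU G K 0 n).Nonempty :=
    fun n => ⟨x0, mem_orbU.2 ⟨0, le_rfl, Nat.zero_le _, x0, hx0, rfl⟩⟩
  obtain ⟨N0, hN0⟩ := hh (h (x0 + S))
  obtain ⟨y1, hy1, hy1m⟩ := (orbU_compact hG hK 0 N0).exists_isMaxOn (hne N0) x.continuous.continuousOn
  obtain ⟨n', z', hz', hxz'⟩ := hup (x y1)
  obtain ⟨y2, hy2, hy2m⟩ := (orbU_compact hG hK 0 n').exists_isMinOn (hne n') x.continuous.continuousOn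
  have hex := hdn (x y2)
  obtain ⟨n3, hn3⟩ : ∃ n3, n3 = Nat.find hex := ⟨_, rfl⟩
  obtain ⟨z3, hz3, hxz3⟩ := Nat.find_spec hex
  rw [← hn3] at hxz3
  have hn3min : ∀ j < n3, ∀ z ∈ K, x y2 ≤ x (G^[j] z) := by
    intro j hj z hz
    by_contra hc
    exact Nat.find_min hex (hn3 ▸ hj) ⟨z, hz, not_le.1 hc⟩
  have hn'3 : n' < n3 := by
    by_contra hc
    have : x y2 ≤ x (G^[n3] z3) :=
      hy2m (mem_orbU.2 ⟨n3, Nat.zero_le _, not_lt.1 hc, z3, hz3, rfl⟩)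
    linarith
  obtain ⟨p3, ⟨w3, hw3, hw3e⟩, hp3m⟩ := (hK.image (hG.iterate n3)).exists_isMinOn
    ⟨_, ⟨x0, hx0, rfl⟩⟩ x.continuous.continuousOn
  have hp3lt : x p3 < x y2 := lt_of_le_of_lt (hp3m ⟨z3, hz3, rfl⟩) hxz3
  have hp3 : ∀ y ∈ orbU G K 0 n3, x p3 ≤ x y := by
    intro y hy
    obtain ⟨j, -, hj, z, hz, rfl⟩ := mem_orbU.1 hy
    rcases hj.lt_or_eq with hj | rfl
    · exact hp3lt.le.trans (hn3min j hj z hz)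
    · exact hp3m ⟨z, hz, rfl⟩
  obtain ⟨p2, hp2, hp2m⟩ := (orbU_compact hG hK 0 n3).exists_isMaxOn (hne n3) x.continuous.continuousOn
  obtain ⟨n2, -, hn23, w2, hw2, hw2e⟩ := mem_orbU.1 hp2
  have hp2gt : x y1 < x p2 :=
    hxz'.trans_le (hp2m (mem_orbU.2 ⟨n', Nat.zero_le _, hn'3.le, z', hz', rfl⟩))
  have hn2 : N0 < n2 := by
    by_contra hc
    have : x p2 ≤ x y1 := hy1m (mem_orbU.2 ⟨n2, Nat.zero_le _, not_lt.1 hc, w2, hw2, hw2e⟩)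
    linarith
  refine ⟨n3, ?_⟩
  by_contra hcon
  push Not at hcon
  have hsub1 : ∀ y ∈ orbU G K 0 n2, y ∈ orbU G K 0 n3 := by
    intro y hy
    obtain ⟨j, h0, hj, r⟩ := mem_orbU.1 hy
    exact mem_orbU.2 ⟨j, h0, hj.trans hn23, r⟩
  have hsub2 : ∀ y ∈ orbU G K n2 n3, y ∈ orbU G K 0 n3 := by
    intro y hy
    obtain ⟨j, h0, hj, r⟩ := mem_orbU.1 hy
    exact mem_orbU.2 ⟨j, Nat.zero_le _, hj, r⟩
  have hhigh : ∀ y ∈ orbU G K n2 n3, h (x0 + S) < h y := by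
    intro y hy
    obtain ⟨j, h0, hj, z, hz, rfl⟩ := mem_orbU.1 hy
    exact hN0 j (hn2.le.trans h0) z hz
  have hp2' : p2 ∈ orbU G K n2 n3 := mem_orbU.2 ⟨n2, le_rfl, hn23, w2, hw2, hw2e⟩
  have hp2'' : p2 ∈ orbU G K 0 n2 := mem_orbU.2 ⟨n2, Nat.zero_le _, le_rfl, w2, hw2, hw2e⟩
  have hp3' : p3 ∈ orbU G K n2 n3 := mem_orbU.2 ⟨n3, hn23, le_rfl, w3, hw3, hw3e⟩
  have hx0' : x0 ∈ orbU G K 0 n2 := mem_orbU.2 ⟨0, le_rfl, Nat.zero_le _, x0, hx0, rfl⟩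
  have hφ := cplx_cont x h
  have hcT : Continuous (fun y => cplx x h (y + S)) := hφ.comp (by fun_prop)
  have hne0 : ∀ y ∈ orbU G K 0 n2, ∀ z ∈ orbU G K n2 n3, cplx x h (y + S) ≠ cplx x h z := by
    intro y hy z hz e
    have := cplx_inj hinj e
    exact hcon y (hsub1 y hy) (this ▸ hsub2 z hz)
  refine cross_lemma ((fun y => cplx x h (y + S)) '' orbU G K 0 n2) (cplx x h '' orbU G K n2 n3)
    ((orbU_compact hG hK _ _).image hcT) ((orbU_compact hG hK _ _).image hφ)
    ((orbU_preconn hG hKc hm _ _).image _ hcT.continuousOn)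
    ((orbU_preconn hG hKc hm _ _).image _ hφ.continuousOn) ?_
    (cplx x h (x0 + S)) (cplx x h (p2 + S)) (cplx x h p2) (cplx x h p3)
    ⟨x0, hx0', rfl⟩ ⟨p2, hp2'', rfl⟩ ⟨p2, hp2', rfl⟩ ⟨p3, hp3', rfl⟩ ?_ ?_ ?_ ?_ ?_ ?_
  · rw [Set.disjoint_left]
    rintro _ ⟨y, hy, rfl⟩ ⟨z, hz, e⟩
    exact hne0 y hy z hz e.symm
  · rintro _ ⟨y, hy, rfl⟩
    refine slit_of_nonneg ?_ (sub_ne_zero.2 (hne0 y hy p2 hp2').symm)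
    have : x y ≤ x p2 := hp2m (hsub1 y hy)
    simp [cplx, hxS]; linarith
  · rintro _ ⟨z, hz, rfl⟩
    right
    have := hhigh z hz
    simp only [cplx, Complex.sub_im]
    linarith
  · rintro _ ⟨y, hy, rfl⟩
    refine slit_of_nonneg ?_ (sub_ne_zero.2 (hne0 y hy p3 hp3'))
    have : x p3 ≤ x y := hp3 y (hsub1 y hy)
    simp [cplx, hxS]; linarith
  · rintro _ ⟨z, hz, rfl⟩
    refine slit_of_nonneg ?_ (sub_ne_zero.2 (hne0 p2 hp2'' z hz))
    have : x z ≤ x p2 := hp2m (hsub2 z hz)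
    simp [cplx, hxS]; linarith
  · simp [cplx]; linarith
  · have := hhigh p3 hp3'
    simp only [cplx, Complex.sub_im]
    linarith

/-- A chain of translates of `C` along `S`. -/
def trU (C : Set (E 2)) (S : E 2) (N : ℕ) : Set (E 2) :=
  ⋃ i ∈ Set.Icc 0 N, (fun y => y + (i : ℝ) • S) '' C

theorem mem_trU {C : Set (E 2)} {S : E 2} {N : ℕ} {y : E 2} :
    y ∈ trU C S N ↔ ∃ i : ℕ, i ≤ N ∧ ∃ z ∈ C, z + (i : ℝ) • S = y := by
  simp only [trU, Set.mem_iUnion, Set.mem_image, Set.mem_Icc, exists_prop, Nat.zero_le, true_and]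

theorem trU_preconn {C : Set (E 2)} {S : E 2} (hC : IsPreconnected C)
    (hS : ∃ y ∈ C, y + S ∈ C) (N : ℕ) : IsPreconnected (trU C S N) := by
  refine IsPreconnected.biUnion_of_chain Set.ordConnected_Icc
    (fun j _ => hC.image _ (by fun_prop)) fun j _ _ => ?_
  obtain ⟨y, hy, hyS⟩ := hS
  refine ⟨y + S + (j : ℝ) • S, ⟨y + S, hyS, rfl⟩, ⟨y, hy, ?_⟩⟩
  simp only [Order.succ_eq_add_one, Nat.cast_add, Nat.cast_one]
  module

theorem fill_lemma (C : Set (E 2)) (hC : IsPreconnected C) (x0 : E 2) (hx0 : x0 ∈ C)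
    (S1 S2 : E 2) (h1 : ∃ y ∈ C, y + S1 ∈ C) (h2 : ∃ y ∈ C, y + S2 ∈ C)
    (s t : E 2 →L[ℝ] ℝ) (s1 : s S1 = 1) (s2 : s S2 = 0) (t1 : t S1 = 0) (t2 : t S2 = 1)
    (hinj : ∀ z, s z = 0 → t z = 0 → z = 0)
    (D : ℝ) (hDs : ∀ y ∈ C, |s y| ≤ D) (hDt : ∀ y ∈ C, |t y| ≤ D) (N : ℕ)
    (w w' : E 2) (ws : D < s w) (ws' : s w < N - D) (wt : D < t w) (wt' : t w < N - D)
    (P : Path w w')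
    (hP : ∀ r, ∀ c ∈ C, ∀ i ≤ N, ∀ j ≤ N, P r ≠ c + (i : ℝ) • S1 + (j : ℝ) • S2)
    (hw' : ∀ c ∈ C, ∀ i ≤ N, ∀ j ≤ N,
      ‖cplx (s - t) (s + t) (c + (i : ℝ) • S1 + (j : ℝ) • S2)‖ < ‖cplx (s - t) (s + t) w'‖) :
    False := by
  have hφ := cplx_cont (s - t) (s + t)
  have hφi : Function.Injective (cplx (s - t) (s + t)) := by
    apply cplx_inj
    intro z e1 e2
    simp only [sub_apply, add_apply] at e1 e2
    exact hinj z (by linarith) (by linarith)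
  obtain ⟨φ, hφd⟩ : ∃ φ, φ = cplx (s - t) (s + t) := ⟨_, rfl⟩
  rw [← hφd] at hφ hφi hw'
  let A := trU C S1 N
  let B := trU C S2 N
  let K1 := A ∪ (fun y => y + (N : ℝ) • S1) '' B
  let K2 := B ∪ (fun y => y + (N : ℝ) • S2) '' A
  have hA : IsPreconnected A := trU_preconn hC h1 N
  have hB : IsPreconnected B := trU_preconn hC h2 N
  have k1 : ∀ y ∈ K1, ∃ c ∈ C, ∃ i ≤ N, ∃ j ≤ N, y = c + (i : ℝ) • S1 + (j : ℝ) • S2 ∧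
      (j = 0 ∨ i = N) := by
    rintro y (hy | ⟨y, hy, rfl⟩)
    · obtain ⟨i, hi, z, hz, rfl⟩ := mem_trU.1 hy
      exact ⟨z, hz, i, hi, 0, Nat.zero_le _, by simp, Or.inl rfl⟩
    · obtain ⟨i, hi, z, hz, rfl⟩ := mem_trU.1 hy
      exact ⟨z, hz, N, le_rfl, i, hi, by simp only; module, Or.inr rfl⟩
  have k2 : ∀ y ∈ K2, ∃ c ∈ C, ∃ i ≤ N, ∃ j ≤ N, y = c + (i : ℝ) • S1 + (j : ℝ) • S2 ∧
      (i = 0 ∨ j = N) := by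
    rintro y (hy | ⟨y, hy, rfl⟩)
    · obtain ⟨i, hi, z, hz, rfl⟩ := mem_trU.1 hy
      exact ⟨z, hz, 0, Nat.zero_le _, i, hi, by simp, Or.inl rfl⟩
    · obtain ⟨i, hi, z, hz, rfl⟩ := mem_trU.1 hy
      exact ⟨z, hz, i, hi, N, le_rfl, rfl, Or.inr rfl⟩
  have xA : x0 ∈ A := mem_trU.2 ⟨0, Nat.zero_le _, x0, hx0, by simp⟩
  have xB : x0 ∈ B := mem_trU.2 ⟨0, Nat.zero_le _, x0, hx0, by simp⟩
  have xA' : x0 + (N : ℝ) • S1 ∈ A := mem_trU.2 ⟨N, le_rfl, x0, hx0, rfl⟩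
  have xB' : x0 + (N : ℝ) • S2 ∈ B := mem_trU.2 ⟨N, le_rfl, x0, hx0, rfl⟩
  have q1 : x0 + (N : ℝ) • S1 + (N : ℝ) • S2 ∈ K1 := Or.inr ⟨_, xB', by simp only; module⟩
  have q2 : x0 + (N : ℝ) • S1 + (N : ℝ) • S2 ∈ K2 := Or.inr ⟨_, xA', rfl⟩
  have hK1 : IsPreconnected K1 := IsPreconnected.union (x0 + (N : ℝ) • S1) xA' ⟨x0, xB, rfl⟩ hA
    (hB.image _ (by fun_prop))
  have hK2 : IsPreconnected K2 := IsPreconnected.union (x0 + (N : ℝ) • S2) xB' ⟨x0, xA, rfl⟩ hB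
    (hA.image _ (by fun_prop))
  have hD := fun y hy => abs_le.1 (hDs y hy)
  have hD' := fun y hy => abs_le.1 (hDt y hy)
  refine wind_lemma (φ '' K1) (φ '' K2) (hK1.image _ hφ.continuousOn) (hK2.image _ hφ.continuousOn)
    (φ x0) (φ (x0 + (N : ℝ) • S1 + (N : ℝ) • S2))
    ⟨_, Or.inl xA, rfl⟩ ⟨_, Or.inl xB, rfl⟩ ⟨_, q1, rfl⟩ ⟨_, q2, rfl⟩ (φ w) (φ w') (P.map hφ)
    ?_ ?_ ?_ ?_ ?_ ?_ ?_ ?_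
  · rintro r ⟨y, hy, e⟩
    obtain ⟨c, hc, i, hi, j, hj, rfl, -⟩ := k1 y hy
    exact hP r c hc i hi j hj (hφi e).symm
  · rintro r ⟨y, hy, e⟩
    obtain ⟨c, hc, i, hi, j, hj, rfl, -⟩ := k2 y hy
    exact hP r c hc i hi j hj (hφi e).symm
  · rintro _ ⟨y, hy, rfl⟩
    obtain ⟨c, hc, i, hi, j, hj, rfl, hij⟩ := k1 y hy
    have := hD c hc
    have := hD' c hc
    have i0 : (0 : ℝ) ≤ i := Nat.cast_nonneg i
    rw [Complex.mem_slitPlane_iff]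
    by_contra hcon
    rw [not_or, not_not, not_lt] at hcon
    simp [hφd, cplx, s1, s2, t1, t2] at hcon
    rcases hij with rfl | rfl
    · push_cast at hcon; linarith
    · linarith
  · rintro _ ⟨y, hy, rfl⟩
    obtain ⟨c, hc, i, hi, j, hj, rfl, hij⟩ := k2 y hy
    have := hD c hc
    have := hD' c hc
    rw [Complex.mem_slitPlane_iff]
    by_contra hcon
    rw [not_or, not_not, not_lt] at hcon
    simp [hφd, cplx, s1, s2, t1, t2] at hcon
    rcases hij with rfl | rfl
    · push_cast at hcon; linarith
    · linarith
  · have := hD x0 hx0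
    have := hD' x0 hx0
    simp [hφd, cplx]; linarith
  · have := hD x0 hx0
    have := hD' x0 hx0
    simp [hφd, cplx, s1, s2, t1, t2]; linarith
  · rintro _ ⟨y, hy, rfl⟩
    obtain ⟨c, hc, i, hi, j, hj, rfl, -⟩ := k1 y hy
    exact hw' c hc i hi j hj
  · rintro _ ⟨y, hy, rfl⟩
    obtain ⟨c, hc, i, hi, j, hj, rfl, -⟩ := k2 y hy
    exact hw' c hc i hi j hj

theorem iter_add {G : E 2 → E 2} (hp : ∀ z, ∀ m ∈ ZLat 2, G (z + m) = G z + m)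
    (n : ℕ) (z m : E 2) (hm : m ∈ ZLat 2) : G^[n] (z + m) = G^[n] z + m := by
  induction n with
  | zero => rfl
  | succ k ih => rw [Function.iterate_succ_apply', Function.iterate_succ_apply', ih, hp _ _ hm]

theorem exists_disp {G : E 2 → E 2} (hG : Continuous G)
    (hp : ∀ z, ∀ m ∈ ZLat 2, G (z + m) = G z + m) : ∃ M, ∀ z, ‖G z - z‖ ≤ M := by
  obtain ⟨y, -, hy⟩ := (isCompact_closedBall (0 : E 2) 2).exists_isMaxOn ⟨0, by simp⟩
    (f := fun z => ‖G z - z‖) (by fun_prop)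
  refine ⟨‖G y - y‖, fun z => ?_⟩
  let m : E 2 := !₂[((⌊z 0⌋ : ℤ) : ℝ), ((⌊z 1⌋ : ℤ) : ℝ)]
  have hm : m ∈ ZLat 2 := by
    intro i
    fin_cases i
    · exact ⟨⌊z 0⌋, rfl⟩
    · exact ⟨⌊z 1⌋, rfl⟩
  have hb : z - m ∈ closedBall (0 : E 2) 2 := by
    rw [mem_closedBall_zero_iff, EuclideanSpace.norm_eq, Real.sqrt_le_left (by norm_num)]
    have e0 : (z - m) 0 = Int.fract (z 0) := rfl
    have e1 : (z - m) 1 = Int.fract (z 1) := rfl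
    rw [Fin.sum_univ_two, e0, e1, Real.norm_eq_abs, Real.norm_eq_abs, sq_abs, sq_abs]
    nlinarith [Int.fract_nonneg (z 0), Int.fract_nonneg (z 1), (Int.fract_lt_one (z 0)).le,
      (Int.fract_lt_one (z 1)).le]
  have h1 := hy hb
  have h2 := hp (z - m) m hm
  rw [sub_add_cancel] at h2
  have h3 : G z - z = G (z - m) - (z - m) := by rw [h2]; abel
  rw [h3]; exact h1

theorem iter_disp {G : E 2 → E 2} {M : ℝ} (hM : ∀ z, ‖G z - z‖ ≤ M) (n : ℕ) (z : E 2) :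
    ‖G^[n] z - z‖ ≤ n * M := by
  induction n with
  | zero => simp
  | succ k ih =>
    rw [Function.iterate_succ_apply']
    have e : G (G^[k] z) - z = (G (G^[k] z) - G^[k] z) + (G^[k] z - z) := by abel
    rw [e]
    refine (norm_add_le _ _).trans ?_
    have := hM (G^[k] z)
    push_cast; linarith

theorem unif_bound {G : E 2 → E 2} {M : ℝ} (hM : ∀ z, ‖G z - z‖ ≤ M) (W : Set (E 2))
    (f : E 2 →L[ℝ] ℝ) (c : ℝ) (hc : ∀ ρ ∈ rotRel G W, f ρ ≤ c) (ε : ℝ) (hε : 0 < ε) :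
    ∃ N, ∀ n ≥ N, ∀ z ∈ W, f (G^[n] z - z) ≤ (c + ε) * (n : ℝ) := by
  by_contra hcon
  push Not at hcon
  choose n hn z hz hlt using fun i : ℕ => hcon (i + 1)
  have hnt : Tendsto n atTop atTop :=
    tendsto_atTop_mono (fun i => (Nat.le_succ i).trans (hn i)) tendsto_id
  have hpos : ∀ i, (0 : ℝ) < n i := fun i => by
    have := hn i
    exact_mod_cast (Nat.succ_pos i).trans_le this
  have hmem : ∀ i, (n i : ℝ)⁻¹ • (G^[n i] (z i) - z i) ∈ closedBall (0 : E 2) M := by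
    intro i
    rw [mem_closedBall_zero_iff, norm_smul, norm_inv, Real.norm_eq_abs, abs_of_pos (hpos i),
      inv_mul_le_iff₀ (hpos i)]
    exact iter_disp hM _ _
  obtain ⟨ρ, -, φ, hφ, hlim⟩ := (isCompact_closedBall (0 : E 2) M).tendsto_subseq hmem
  have hρ : ρ ∈ rotRel G W :=
    ⟨n ∘ φ, z ∘ φ, hnt.comp hφ.tendsto_atTop, fun i => hz _, hlim⟩
  have h1 : Tendsto (fun i => f ((n (φ i) : ℝ)⁻¹ • (G^[n (φ i)] (z (φ i)) - z (φ i)))) atTop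
      (𝓝 (f ρ)) := (f.continuous.tendsto ρ).comp hlim
  have h2 : c + ε ≤ f ρ := by
    refine ge_of_tendsto' h1 fun i => ?_
    rw [map_smul, smul_eq_mul, le_inv_mul_iff₀ (hpos _), mul_comm]
    exact (hlt _).le
  linarith [hc ρ hρ]

theorem unif_bound_closure {G : E 2 → E 2} (hG : Continuous G) (W : Set (E 2))
    (f : E 2 →L[ℝ] ℝ) (c : ℝ)
    (h : ∃ N : ℕ, ∀ n ≥ N, ∀ z ∈ W, f (G^[n] z - z) ≤ c * (n : ℝ)) :
    ∃ N : ℕ, ∀ n ≥ N, ∀ z ∈ closure W, f (G^[n] z - z) ≤ c * (n : ℝ) := by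
  obtain ⟨N, hN⟩ := h
  refine ⟨N, fun n hn z hz => ?_⟩
  have hcl : IsClosed {z : E 2 | f (G^[n] z - z) ≤ c * (n : ℝ)} :=
    isClosed_le (f.continuous.comp ((hG.iterate n).sub continuous_id)) continuous_const
  exact closure_minimal (fun z hz => hN n hn z hz) hcl hz

theorem unbdd_above {G : E 2 → E 2} (W : Set (E 2)) (f : E 2 →L[ℝ] ℝ) (B0 : ℝ)
    (hB0 : ∀ z ∈ W, |f z| ≤ B0) (ρ : E 2) (hρ : ρ ∈ rotRel G W) (hfρ : 0 < f ρ) (B : ℝ) :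
    ∃ n, ∃ z ∈ W, B < f (G^[n] z) := by
  obtain ⟨n, z, hn, hz, hlim⟩ := hρ
  have h1 : Tendsto (fun i => f ((n i : ℝ)⁻¹ • (G^[n i] (z i) - z i))) atTop
      (𝓝 (f ρ)) := (f.continuous.tendsto ρ).comp hlim
  have h2 := h1.eventually (lt_mem_nhds (half_lt_self hfρ))
  have hnr : Tendsto (fun i => (n i : ℝ)) atTop atTop := tendsto_natCast_atTop_atTop.comp hn
  have h3 := hnr.eventually (eventually_gt_atTop (max 0 ((B + B0) / (f ρ / 2))))
  obtain ⟨i, hi2, hi3⟩ := (h2.and h3).exists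
  refine ⟨n i, z i, hz i, ?_⟩
  have hp : (0 : ℝ) < n i := lt_of_le_of_lt (le_max_left _ _) hi3
  have hq := lt_of_le_of_lt (le_max_right _ _) hi3
  rw [div_lt_iff₀ (half_pos hfρ)] at hq
  rw [map_smul, smul_eq_mul, lt_inv_mul_iff₀ hp, map_sub] at hi2
  have := abs_le.1 (hB0 _ (hz i))
  linarith

theorem rotRel_le_of_bound {G : E 2 → E 2} (W : Set (E 2)) (f : E 2 →L[ℝ] ℝ) (c Cst : ℝ)
    (N : ℕ) (h : ∀ m ≥ N, ∀ z ∈ W, f (G^[m] z - z) ≤ c * m + Cst) (ρ : E 2)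
    (hρ : ρ ∈ rotRel G W) : f ρ ≤ c := by
  obtain ⟨n, z, hn, hz, hlim⟩ := hρ
  have h1 : Tendsto (fun i => f ((n i : ℝ)⁻¹ • (G^[n i] (z i) - z i))) atTop
      (𝓝 (f ρ)) := (f.continuous.tendsto ρ).comp hlim
  have hnr : Tendsto (fun i => (n i : ℝ)) atTop atTop := tendsto_natCast_atTop_atTop.comp hn
  have h2 : Tendsto (fun i => c + Cst * (n i : ℝ)⁻¹) atTop (𝓝 (c + Cst * 0)) :=
    (hnr.inv_tendsto_atTop.const_mul Cst).const_add c
  rw [mul_zero, add_zero] at h2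
  refine le_of_tendsto_of_tendsto h1 h2 ?_
  filter_upwards [hnr.eventually (eventually_gt_atTop 0), hn.eventually (eventually_ge_atTop N)]
    with i hi hi'
  rw [map_smul, smul_eq_mul, inv_mul_le_iff₀ hi]
  refine (h _ hi' _ (hz i)).trans (le_of_eq ?_)
  field_simp

theorem push_bound (G : E 2 ≃ₜ E 2) (C : Set (E 2)) (hC : IsPreconnected C) (x0 : E 2)
    (hx0 : x0 ∈ C)
    (S1 S2 : E 2) (h1 : ∃ y ∈ C, y + S1 ∈ C) (h2 : ∃ y ∈ C, y + S2 ∈ C)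
    (s t : E 2 →L[ℝ] ℝ) (s1 : s S1 = 1) (s2 : s S2 = 0) (t1 : t S1 = 0) (t2 : t S2 = 1)
    (hdec : ∀ z, z = s z • S1 + t z • S2)
    (D : ℝ) (hDs : ∀ y ∈ C, |s y| ≤ D) (hDt : ∀ y ∈ C, |t y| ≤ D) (N : ℕ)
    (w : E 2) (ws : D < s w) (ws' : s w < N - D) (wt : D < t w) (wt' : t w < N - D)
    (f : E 2 →L[ℝ] ℝ) (m : ℕ) (B : ℝ)
    (hB : ∀ c ∈ C, ∀ i ≤ N, ∀ j ≤ N, f (G^[m] (c + (i : ℝ) • S1 + (j : ℝ) • S2)) ≤ B) :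
    f (G^[m] w) ≤ B := by
  by_contra hcon
  rw [not_le] at hcon
  have hinj : ∀ z, s z = 0 → t z = 0 → z = 0 := by
    intro z e1 e2
    rw [hdec z, e1, e2]; simp
  have hu : ∃ u, 0 < f u := by
    have h := hB x0 hx0 0 (Nat.zero_le _) 0 (Nat.zero_le _)
    exact ⟨G^[m] w - G^[m] (x0 + ((0 : ℕ) : ℝ) • S1 + ((0 : ℕ) : ℝ) • S2), by
      rw [map_sub]; linarith⟩
  obtain ⟨u, hu⟩ := hu
  have hl : Function.LeftInverse (G.symm)^[m] G^[m] :=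
    Function.LeftInverse.iterate G.symm_apply_apply m
  have hr : Function.RightInverse (G.symm)^[m] G^[m] :=
    Function.RightInverse.iterate G.apply_symm_apply m
  have hD0 : 0 ≤ D := (abs_nonneg _).trans (hDs x0 hx0)
  let L : ℝ := 4 * (D + N)
  obtain ⟨ym, -, hym⟩ := (isCompact_closedBall (0 : E 2) (L * (‖S1‖ + ‖S2‖))).exists_isMaxOn
    ⟨0, mem_closedBall_self (by positivity)⟩ (f := fun z => f (G^[m] z))
    (f.continuous.comp (G.continuous.iterate m)).continuousOn
  obtain ⟨R, hR0, hR⟩ : ∃ R : ℝ, 0 ≤ R ∧ f (G^[m] ym) < f (G^[m] w) + R * f u := by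
    refine ⟨|f (G^[m] ym) - f (G^[m] w)| / f u + 1, by positivity, ?_⟩
    rw [add_mul, div_mul_cancel₀ _ hu.ne']
    linarith [le_abs_self (f (G^[m] ym) - f (G^[m] w))]
  let w' : E 2 := (G.symm)^[m] (G^[m] w + R • u)
  let P : Path w w' :=
    { toFun := fun r => (G.symm)^[m] (G^[m] w + ((r : ℝ) * R) • u)
      continuous_toFun := (G.symm.continuous.iterate m).comp (by fun_prop)
      source' := by simpa using hl w
      target' := by simp [w'] }
  refine fill_lemma C hC x0 hx0 S1 S2 h1 h2 s t s1 s2 t1 t2 hinj D hDs hDt N w w' ws ws' wt wt'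
    P ?_ ?_
  · intro r c hc i hi j hj e
    have e1 : (G.symm)^[m] (G^[m] w + ((r : ℝ) * R) • u) = c + (i : ℝ) • S1 + (j : ℝ) • S2 := e
    have h := hB c hc i hi j hj
    rw [← e1, hr, map_add, map_smul, smul_eq_mul] at h
    have : 0 ≤ (r : ℝ) * R * f u := mul_nonneg (mul_nonneg r.2.1 hR0) hu.le
    linarith
  · intro c hc i hi j hj
    have hi' : (i : ℝ) ≤ N := by exact_mod_cast hi
    have hj' : (j : ℝ) ≤ N := by exact_mod_cast hj
    have hi0 : (0 : ℝ) ≤ i := Nat.cast_nonneg _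
    have hj0 : (0 : ℝ) ≤ j := Nat.cast_nonneg _
    have hs := abs_le.1 (hDs c hc)
    have ht := abs_le.1 (hDt c hc)
    have b1 : ‖cplx (s - t) (s + t) (c + (i : ℝ) • S1 + (j : ℝ) • S2)‖ ≤ L := by
      refine (Complex.norm_le_abs_re_add_abs_im _).trans ?_
      have a1 : |s c + i - (t c + j)| ≤ 2 * (D + N) := abs_le.2 ⟨by linarith, by linarith⟩
      have a2 : |s c + i + (t c + j)| ≤ 2 * (D + N) := abs_le.2 ⟨by linarith, by linarith⟩
      have q1 : (cplx (s - t) (s + t) (c + (i : ℝ) • S1 + (j : ℝ) • S2)).re =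
          s c + i - (t c + j) := by
        simp [cplx, s1, s2, t1, t2]
      have q2 : (cplx (s - t) (s + t) (c + (i : ℝ) • S1 + (j : ℝ) • S2)).im =
          s c + i + (t c + j) := by
        simp [cplx, s1, s2, t1, t2]
      rw [q1, q2]
      simp only [L]; linarith
    refine b1.trans_lt ?_
    by_contra hc2
    rw [not_lt] at hc2
    have r1 := abs_le.1 ((Complex.abs_re_le_norm _).trans hc2)
    have r2 := abs_le.1 ((Complex.abs_im_le_norm _).trans hc2)
    simp only [cplx, sub_apply, add_apply] at r1 r2
    have as : |s w'| ≤ L := abs_le.2 ⟨by linarith, by linarith⟩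
    have at' : |t w'| ≤ L := abs_le.2 ⟨by linarith, by linarith⟩
    have hw : w' ∈ closedBall (0 : E 2) (L * (‖S1‖ + ‖S2‖)) := by
      rw [mem_closedBall_zero_iff, hdec w', mul_add]
      refine (norm_add_le _ _).trans ?_
      rw [norm_smul, norm_smul, Real.norm_eq_abs, Real.norm_eq_abs]
      gcongr
    have h := hym hw
    have e : G^[m] w' = G^[m] w + R • u := hr _
    have h' : f (G^[m] w') ≤ f (G^[m] ym) := h
    rw [e, map_add, map_smul, smul_eq_mul] at h'
    linarith

theorem global_bound (G : E 2 ≃ₜ E 2) (hp : ∀ z, ∀ m ∈ ZLat 2, G (z + m) = G z + m)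
    (M : ℝ) (hM : ∀ z, ‖G z - z‖ ≤ M) (K : Set (E 2)) (hK : IsCompact K)
    (hKc : IsPreconnected K) (hm : (⇑G '' K ∩ K).Nonempty) (n : ℕ)
    (S1 S2 : E 2) (hS1 : S1 ∈ ZLat 2) (hS2 : S2 ∈ ZLat 2)
    (h1 : ∃ y ∈ orbU G K 0 n, y + S1 ∈ orbU G K 0 n)
    (h2 : ∃ y ∈ orbU G K 0 n, y + S2 ∈ orbU G K 0 n)
    (s t : E 2 →L[ℝ] ℝ) (s1 : s S1 = 1) (s2 : s S2 = 0) (t1 : t S1 = 0) (t2 : t S2 = 1)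
    (hdec : ∀ z, z = s z • S1 + t z • S2) (f : E 2 →L[ℝ] ℝ) (c : ℝ)
    (hf : ∃ N : ℕ, ∀ m ≥ N, ∀ z ∈ K, f (G^[m] z - z) ≤ c * (m : ℝ)) :
    ∃ (Cst : ℝ) (N : ℕ), ∀ m ≥ N, ∀ z, f (G^[m] z - z) ≤ c * (m : ℝ) + Cst := by
  obtain ⟨N0, hN0⟩ := hf
  obtain ⟨x0, hx0⟩ : K.Nonempty := hm.mono Set.inter_subset_right
  have hCcomp := orbU_compact G.continuous hK 0 n
  have hCc := orbU_preconn G.continuous hKc hm 0 n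
  have hx0C : x0 ∈ orbU G K 0 n := mem_orbU.2 ⟨0, le_rfl, Nat.zero_le _, x0, hx0, rfl⟩
  obtain ⟨D1, hD1⟩ := hCcomp.exists_bound_of_continuousOn s.continuous.continuousOn
  obtain ⟨D2, hD2⟩ := hCcomp.exists_bound_of_continuousOn t.continuous.continuousOn
  obtain ⟨F, hF⟩ := hK.exists_bound_of_continuousOn f.continuous.continuousOn
  obtain ⟨D, hD⟩ := exists_nat_ge (max D1 D2)
  have hDs : ∀ y ∈ orbU G K 0 n, |s y| ≤ D := fun y hy =>
    (hD1 y hy).trans ((le_max_left _ _).trans hD)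
  have hDt : ∀ y ∈ orbU G K 0 n, |t y| ≤ D := fun y hy =>
    (hD2 y hy).trans ((le_max_right _ _).trans hD)
  have hM0 : 0 ≤ M := (norm_nonneg _).trans (hM 0)
  let N : ℕ := 2 * D + 3
  have hNc : (N : ℝ) = 2 * D + 3 := by simp [N]
  have nat_mul : ∀ (k : ℕ) (S : E 2), S ∈ ZLat 2 → (k : ℝ) • S ∈ ZLat 2 := by
    intro k S hS
    rw [Nat.cast_smul_eq_nsmul]; exact AddSubgroup.nsmul_mem _ hS k
  have int_mul : ∀ (k : ℤ) (S : E 2), S ∈ ZLat 2 → (k : ℝ) • S ∈ ZLat 2 := by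
    intro k S hS
    rw [Int.cast_smul_eq_zsmul]; exact AddSubgroup.zsmul_mem _ hS k
  let A : ℝ := F + ‖f‖ * (n * M) + N * (|f S1| + |f S2|)
  refine ⟨A + (D + 2) * (|f S1| + |f S2|), N0, fun m hm' z => ?_⟩
  have hB : ∀ y ∈ orbU G K 0 n, ∀ i ≤ N, ∀ j ≤ N,
      f (G^[m] (y + (i : ℝ) • S1 + (j : ℝ) • S2)) ≤ c * m + A := by
    intro y hy i hi j hj
    have hi' : (i : ℝ) ≤ N := by exact_mod_cast hi
    have hj' : (j : ℝ) ≤ N := by exact_mod_cast hj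
    obtain ⟨k, -, hk, x, hx, rfl⟩ := mem_orbU.1 hy
    rw [iter_add hp _ _ _ (nat_mul _ _ hS2), iter_add hp _ _ _ (nat_mul _ _ hS1),
      ← Function.iterate_add_apply, Nat.add_comm, Function.iterate_add_apply]
    have e : G^[k] (G^[m] x) + (i : ℝ) • S1 + (j : ℝ) • S2 =
        (G^[k] (G^[m] x) - G^[m] x) + (G^[m] x - x) + x + (i : ℝ) • S1 + (j : ℝ) • S2 := by abel
    rw [e, map_add, map_add, map_add, map_add, map_smul, map_smul, smul_eq_mul, smul_eq_mul]
    have b1 : f (G^[k] (G^[m] x) - G^[m] x) ≤ ‖f‖ * (n * M) := by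
      refine (le_abs_self _).trans ((f.le_opNorm _).trans ?_)
      have hk' : (k : ℝ) ≤ n := by exact_mod_cast hk
      have := iter_disp hM k (G^[m] x)
      have h3 : (k : ℝ) * M ≤ n * M := by gcongr
      gcongr
      linarith
    have b2 := hN0 m hm' x hx
    have b3 : f x ≤ F := (le_abs_self _).trans (hF x hx)
    have b4 : (i : ℝ) * f S1 ≤ N * |f S1| := by
      calc (i : ℝ) * f S1 ≤ i * |f S1| := mul_le_mul_of_nonneg_left (le_abs_self _) (Nat.cast_nonneg _)
          _ ≤ N * |f S1| := by gcongr
    have b5 : (j : ℝ) * f S2 ≤ N * |f S2| := by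
      calc (j : ℝ) * f S2 ≤ j * |f S2| := mul_le_mul_of_nonneg_left (le_abs_self _) (Nat.cast_nonneg _)
          _ ≤ N * |f S2| := by gcongr
    simp only [A]
    linarith
  obtain ⟨k1, hk1, hk1'⟩ : ∃ k : ℤ, D + 1 ≤ s z + k ∧ s z + k < D + 2 :=
    ⟨⌈D + 1 - s z⌉, by linarith [Int.le_ceil (D + 1 - s z)],
      by linarith [Int.ceil_lt_add_one (D + 1 - s z)]⟩
  obtain ⟨k2, hk2, hk2'⟩ : ∃ k : ℤ, D + 1 ≤ t z + k ∧ t z + k < D + 2 :=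
    ⟨⌈D + 1 - t z⌉, by linarith [Int.le_ceil (D + 1 - t z)],
      by linarith [Int.ceil_lt_add_one (D + 1 - t z)]⟩
  obtain ⟨w, hw⟩ : ∃ w, w = z + (k1 : ℝ) • S1 + (k2 : ℝ) • S2 := ⟨_, rfl⟩
  have sw : s w = s z + k1 := by rw [hw]; simp [s1, s2]
  have tw : t w = t z + k2 := by rw [hw]; simp [t1, t2]
  have key := push_bound G _ hCc x0 hx0C S1 S2 h1 h2 s t s1 s2 t1 t2 hdec D hDs hDt N w
    (by linarith) (by linarith) (by linarith) (by linarith) f m _ hB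
  have e : G^[m] z - z = G^[m] w - w := by
    rw [hw, iter_add hp _ _ _ (int_mul _ _ hS2), iter_add hp _ _ _ (int_mul _ _ hS1)]; abel
  have fw : -((D + 2) * (|f S1| + |f S2|)) ≤ f w := by
    have e1 : f w = s w * f S1 + t w * f S2 := by
      conv_lhs => rw [hdec w]
      simp
    have a1 : |s w * f S1| ≤ (D + 2) * |f S1| := by
      rw [abs_mul]
      gcongr
      exact abs_le.2 ⟨by linarith [(Nat.cast_nonneg D : (0 : ℝ) ≤ D)], by linarith⟩
    have a2 : |t w * f S2| ≤ (D + 2) * |f S2| := by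
      rw [abs_mul]
      gcongr
      exact abs_le.2 ⟨by linarith [(Nat.cast_nonneg D : (0 : ℝ) ≤ D)], by linarith⟩
    have := (abs_le.1 a1).1
    have := (abs_le.1 a2).1
    rw [e1]; linarith
  rw [e, map_sub]
  linarith

/-- The linear functional `z ↦ p z₀ + q z₁`. -/
def lin (p q : ℝ) : E 2 →L[ℝ] ℝ :=
  p • (EuclideanSpace.proj (𝕜 := ℝ) (0 : Fin 2)) + q • (EuclideanSpace.proj (𝕜 := ℝ) (1 : Fin 2))

theorem lin_apply (p q : ℝ) (z : E 2) : lin p q z = p * z 0 + q * z 1 := by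
  simp [lin]

theorem exists_lattice (v : E 2) (hv : v ≠ 0) (a b : ℝ) (hab : a < b) :
    ∃ S1 ∈ ZLat 2, ∃ S2 ∈ ZLat 2, a * sdot v S1 < pdot v S1 ∧ pdot v S1 < b * sdot v S1 ∧
      a * sdot v S2 < pdot v S2 ∧ pdot v S2 < b * sdot v S2 ∧
      S1 0 * S2 1 - S1 1 * S2 0 ≠ 0 := by
  have hq : 0 < v 0 ^ 2 + v 1 ^ 2 := by
    by_contra hc
    apply hv
    have h0 : v 0 = 0 := by nlinarith [sq_nonneg (v 0), sq_nonneg (v 1)]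
    have h1 : v 1 = 0 := by nlinarith [sq_nonneg (v 0), sq_nonneg (v 1)]
    ext i; fin_cases i
    · exact h0
    · exact h1
  obtain ⟨κ, hκ⟩ : ∃ κ, κ = (a + b) / 2 := ⟨_, rfl⟩
  obtain ⟨q, hqd⟩ : ∃ q, q = v 0 ^ 2 + v 1 ^ 2 := ⟨_, rfl⟩
  rw [← hqd] at hq
  have hδ : 0 < (b - a) / 2 * q := by
    have : 0 < (b - a) / 2 := by linarith
    positivity
  obtain ⟨A, hA⟩ : ∃ A, A = |(-v 1 - a * v 0)| + |v 0 - a * v 1| + |b * v 0 + v 1| +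
      |b * v 1 - v 0| := ⟨_, rfl⟩
  obtain ⟨Tt, hT⟩ : ∃ Tt : ℝ, A < Tt * ((b - a) / 2 * q) := by
    refine ⟨(A + 1) / ((b - a) / 2 * q), ?_⟩
    rw [div_mul_cancel₀ _ hδ.ne']; linarith
  obtain ⟨d0, hd0⟩ : ∃ d0, d0 = Tt * (v 0 - κ * v 1) := ⟨_, rfl⟩
  obtain ⟨d1, hd1⟩ : ∃ d1, d1 = Tt * (v 1 + κ * v 0) := ⟨_, rfl⟩
  have bd : ∀ p x : ℝ, |x| ≤ 1 → -|p| ≤ p * x := by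
    intro p x hx
    have : |p * x| ≤ |p| := by
      rw [abs_mul]; exact mul_le_of_le_one_right (abs_nonneg _) hx
    exact (abs_le.1 this).1
  have main : ∀ z : E 2, |z 0 - d0| ≤ 1 → |z 1 - d1| ≤ 1 →
      a * sdot v z < pdot v z ∧ pdot v z < b * sdot v z := by
    intro z hz0 hz1
    have e1 : pdot v z - a * sdot v z = Tt * ((b - a) / 2 * q) +
        (-v 1 - a * v 0) * (z 0 - d0) + (v 0 - a * v 1) * (z 1 - d1) := by
      simp only [sdot, pdot]; rw [hd0, hd1, hκ, hqd]; ring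
    have e2 : b * sdot v z - pdot v z = Tt * ((b - a) / 2 * q) +
        (b * v 0 + v 1) * (z 0 - d0) + (b * v 1 - v 0) * (z 1 - d1) := by
      simp only [sdot, pdot]; rw [hd0, hd1, hκ, hqd]; ring
    have b1 := bd (-v 1 - a * v 0) _ hz0
    have b2 := bd (v 0 - a * v 1) _ hz1
    have b3 := bd (b * v 0 + v 1) _ hz0
    have b4 := bd (b * v 1 - v 0) _ hz1
    have p1 := abs_nonneg (-v 1 - a * v 0)
    have p2 := abs_nonneg (v 0 - a * v 1)
    have p3 := abs_nonneg (b * v 0 + v 1)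
    have p4 := abs_nonneg (b * v 1 - v 0)
    constructor <;> linarith
  have hlat : ∀ m k : ℤ, (!₂[(m : ℝ), (k : ℝ)] : E 2) ∈ ZLat 2 := by
    intro m k i
    fin_cases i
    · exact ⟨m, rfl⟩
    · exact ⟨k, rfl⟩
  have f0 := Int.floor_le d0
  have f0' := (Int.lt_floor_add_one d0).le
  have f1 := Int.floor_le d1
  have f1' := (Int.lt_floor_add_one d1).le
  obtain ⟨m0, hm0⟩ : ∃ m0, m0 = ⌊d0⌋ := ⟨_, rfl⟩
  obtain ⟨m1, hm1⟩ : ∃ m1, m1 = ⌊d1⌋ := ⟨_, rfl⟩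
  rw [← hm0] at f0 f0'
  rw [← hm1] at f1 f1'
  have c1 := main !₂[(m0 : ℝ), (m1 : ℝ)] (abs_le.2 ⟨by simp; linarith, by simp; linarith⟩)
    (abs_le.2 ⟨by simp; linarith, by simp; linarith⟩)
  have c2 := main !₂[((m0 + 1 : ℤ) : ℝ), (m1 : ℝ)]
    (abs_le.2 ⟨by simp; linarith, by simp; linarith⟩)
    (abs_le.2 ⟨by simp; linarith, by simp; linarith⟩)
  have c3 := main !₂[(m0 : ℝ), ((m1 + 1 : ℤ) : ℝ)]
    (abs_le.2 ⟨by simp; linarith, by simp; linarith⟩)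
    (abs_le.2 ⟨by simp; linarith, by simp; linarith⟩)
  by_cases h : (m1 : ℝ) = 0
  · refine ⟨_, hlat m0 m1, _, hlat m0 (m1 + 1), c1.1, c1.2, c3.1, c3.2, ?_⟩
    have hne : (m0 : ℝ) ≠ 0 := by
      intro h0
      have := c1.1
      simp [sdot, pdot, h, h0] at this
    simp [h]
    exact_mod_cast hne
  · refine ⟨_, hlat m0 m1, _, hlat (m0 + 1) m1, c1.1, c1.2, c2.1, c2.2, ?_⟩
    simp
    intro hh
    apply h
    linarith

/-- **Lemma (the rotation subset determines the rotation set).**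
If `Û ⊆ ℝ²` is bounded and connected with `G(Û) ∩ Û ≠ ∅` and
`ρ_Û(G) = L_{λ,v}[a,b]` with `λ ≠ 0` and `a < b`, then `ρ(G) = L_{λ,v}[a,b]`. -/
theorem rotation_set_equals_segment
    (G : E 2 ≃ₜ E 2) (g : T 2 ≃ₜ T 2) (hlift : IsLift G g)
    (Uh : Set (E 2)) (hUb : Bornology.IsBounded Uh) (hUc : IsConnected Uh)
    (hmeet : ((⇑G) '' Uh ∩ Uh).Nonempty)
    (lam : ℝ) (hlam : lam ≠ 0) (v : E 2) (hv : v ≠ 0) (a b : ℝ) (hab : a < b)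
    (hrot : rotRel (⇑G) Uh = lineSeg lam v a b) :
    rotSet (⇑G) = lineSeg lam v a b := by
  have hp := hlift.2
  have hGc := G.continuous
  obtain ⟨M, hM⟩ := exists_disp hGc hp
  have hsub : rotRel (⇑G) Uh ⊆ rotSet (⇑G) := by
    rintro ρ ⟨n, z, hn, -, hl⟩
    exact ⟨n, z, hn, fun _ => Set.mem_univ _, hl⟩
  have hq : 0 < v 0 ^ 2 + v 1 ^ 2 := by
    by_contra hc
    apply hv
    have h0 : v 0 = 0 := by nlinarith [sq_nonneg (v 0), sq_nonneg (v 1)]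
    have h1 : v 1 = 0 := by nlinarith [sq_nonneg (v 0), sq_nonneg (v 1)]
    ext i; fin_cases i
    · exact h0
    · exact h1
  have hvv : 0 < sdot v v := by simp only [sdot]; nlinarith
  -- the sign of `lam`
  have hlampos : 0 < lam := by
    by_contra hneg
    have hneg' : lam < 0 := lt_of_le_of_ne (not_lt.1 hneg) hlam
    have hempty : ∀ ρ ∈ rotRel (⇑G) Uh, (0 : E 2 →L[ℝ] ℝ) ρ ≤ -1 := by
      intro ρ hρ
      rw [hrot] at hρ
      obtain ⟨h1, h2, h3⟩ := hρ
      have h1' : sdot v ρ = lam * sdot v v := h1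
      have : sdot v ρ < 0 := by rw [h1']; exact mul_neg_of_neg_of_pos hneg' hvv
      nlinarith
    obtain ⟨N, hN⟩ := unif_bound hM Uh 0 (-1) hempty (1 / 2) (by norm_num)
    obtain ⟨z, hz⟩ := hUc.nonempty
    have := hN (N + 1) (Nat.le_succ N) z hz
    have hN0 : (0 : ℝ) ≤ N := Nat.cast_nonneg N
    simp at this
    linarith
  -- the compact connected set
  obtain ⟨K, hKd⟩ : ∃ K, K = closure Uh := ⟨_, rfl⟩
  have hUK : Uh ⊆ K := hKd ▸ subset_closure
  have hK : IsCompact K := hKd ▸ hUb.isCompact_closure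
  have hKc : IsPreconnected K := hKd ▸ hUc.isPreconnected.closure
  have hm : (⇑G '' K ∩ K).Nonempty :=
    hmeet.mono (Set.inter_subset_inter (Set.image_mono hUK) hUK)
  -- functionals
  obtain ⟨h, hh⟩ : ∃ h : E 2 →L[ℝ] ℝ, ∀ z, h z = sdot v z :=
    ⟨lin (v 0) (v 1), fun z => by rw [lin_apply]; simp only [sdot]; ring⟩
  obtain ⟨pd, hpd⟩ : ∃ pd : E 2 →L[ℝ] ℝ, ∀ z, pd z = pdot v z :=
    ⟨lin (-v 1) (v 0), fun z => by rw [lin_apply]; simp only [pdot]; ring⟩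
  have hinj0 : ∀ z, pd z = 0 → h z = 0 → z = 0 := by
    intro z e1 e2
    rw [hpd] at e1
    rw [hh] at e2
    simp only [sdot, pdot] at e1 e2
    have h0 : z 0 * (v 0 ^ 2 + v 1 ^ 2) = 0 := by linear_combination v 0 * e2 - v 1 * e1
    have h1 : z 1 * (v 0 ^ 2 + v 1 ^ 2) = 0 := by linear_combination v 1 * e2 + v 0 * e1
    have h0' := (mul_eq_zero.1 h0).resolve_right hq.ne'
    have h1' := (mul_eq_zero.1 h1).resolve_right hq.ne'
    ext i; fin_cases i
    · exact h0'
    · exact h1'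
  have hrotmem : ∀ ρ ∈ rotRel (⇑G) Uh,
      h ρ = lam * sdot v v ∧ a * h ρ ≤ pd ρ ∧ pd ρ ≤ b * h ρ := by
    intro ρ hρ
    rw [hrot] at hρ
    rw [hh, hpd]
    exact ⟨hρ.1, hρ.2.1, hρ.2.2⟩
  -- vectors with prescribed slope in the segment
  have hend : ∀ κ, a ≤ κ → κ ≤ b → ∃ ρ ∈ rotRel (⇑G) Uh,
      h ρ = lam * sdot v v ∧ pd ρ = κ * (lam * sdot v v) := by
    intro κ h1 h2
    let ρ : E 2 := !₂[lam * (v 0 - κ * v 1), lam * (v 1 + κ * v 0)]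
    have e1 : sdot v ρ = lam * sdot v v := by simp [sdot, ρ]; ring
    have e2 : pdot v ρ = κ * (lam * sdot v v) := by simp [sdot, pdot, ρ]; ring
    have hpos : 0 < lam * sdot v v := mul_pos hlampos hvv
    refine ⟨ρ, ?_, by rw [hh, e1], by rw [hpd, e2]⟩
    rw [hrot]
    refine ⟨e1, ?_, ?_⟩
    · rw [e1, e2]; exact mul_le_mul_of_nonneg_right h1 hpos.le
    · rw [e1, e2]; exact mul_le_mul_of_nonneg_right h2 hpos.le
  have hposL : 0 < lam * sdot v v := mul_pos hlampos hvv
  have hUbdd : ∀ f : E 2 →L[ℝ] ℝ, ∃ B0, ∀ z ∈ K, |f z| ≤ B0 := fun f =>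
    hK.exists_bound_of_continuousOn f.continuous.continuousOn
  have hhinf : ∀ B : ℝ, ∃ N, ∀ n ≥ N, ∀ z ∈ K, B < h (G^[n] z) := by
    intro B
    have hle : ∀ ρ ∈ rotRel (⇑G) Uh, (-h) ρ ≤ -(lam * sdot v v) := by
      intro ρ hρ
      rw [neg_apply, (hrotmem ρ hρ).1]
    obtain ⟨N, hN⟩ := unif_bound_closure hGc Uh (-h) _
      (unif_bound hM Uh (-h) _ hle (lam * sdot v v / 2) (half_pos hposL))
    obtain ⟨B0, hB0⟩ := hUbdd h
    obtain ⟨N', hN'⟩ := exists_nat_gt ((B + B0) / (lam * sdot v v / 2))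
    refine ⟨max N N', fun n hn z hz => ?_⟩
    have h1 := hN n ((le_max_left _ _).trans hn) z (hKd ▸ hz)
    have h2 : (N' : ℝ) ≤ n := by exact_mod_cast (le_max_right _ _).trans hn
    have h3 := abs_le.1 (hB0 z hz)
    have h4 := hN'.trans_le h2
    rw [div_lt_iff₀ (half_pos hposL)] at h4
    rw [neg_apply, map_sub] at h1
    linarith
  obtain ⟨S1, hS1, S2, hS2, c1, c2, c3, c4, hdet⟩ := exists_lattice v hv a b hab
  have hchord : ∀ S : E 2, a * sdot v S < pdot v S → pdot v S < b * sdot v S →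
      ∃ n, ∃ y ∈ orbU G K 0 n, y + S ∈ orbU G K 0 n := by
    intro S d1 d2
    have hSpos : 0 < h S := by
      rw [hh]; by_contra hc; nlinarith
    rw [← hh, ← hpd] at d1 d2
    obtain ⟨x, hx⟩ : ∃ x : E 2 →L[ℝ] ℝ, ∀ z, x z = h S * pd z - pd S * h z :=
      ⟨h S • pd - pd S • h, fun z => by simp⟩
    have hunb : ∀ f : E 2 →L[ℝ] ℝ, ∀ ρ ∈ rotRel (⇑G) Uh, 0 < f ρ → ∀ B : ℝ,
        ∃ n, ∃ z ∈ K, B < f (G^[n] z) := by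
      intro f ρ hρ hf B
      obtain ⟨B0, hB0⟩ := hUbdd f
      obtain ⟨n, z, hz, r⟩ := unbdd_above Uh f B0 (fun z hz => hB0 z (hUK hz)) ρ hρ hf B
      exact ⟨n, z, hUK hz, r⟩
    refine dyn_cross G hGc K hK hKc hm x h ?_ S (by rw [hx]; ring) hSpos ?_ ?_ hhinf
    · intro z e1 e2
      rw [hx, e2, mul_zero, sub_zero] at e1
      exact hinj0 z ((mul_eq_zero.1 e1).resolve_left hSpos.ne') e2
    · obtain ⟨ρ, hρ, r1, r2⟩ := hend b hab.le le_rfl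
      refine hunb x ρ hρ ?_
      rw [hx, r1, r2]
      have : 0 < (b * h S - pd S) * (lam * sdot v v) := mul_pos (by linarith) hposL
      linarith
    · obtain ⟨ρ, hρ, r1, r2⟩ := hend a le_rfl hab.le
      intro B
      obtain ⟨n, z, hz, r⟩ := hunb (-x) ρ hρ (by
        rw [neg_apply, hx, r1, r2]
        have : 0 < (pd S - a * h S) * (lam * sdot v v) := mul_pos (by linarith) hposL
        linarith) (-B)
      refine ⟨n, z, hz, ?_⟩
      rw [neg_apply] at r
      linarith
  have horb : ∀ n n' : ℕ, n ≤ n' → ∀ y ∈ orbU G K 0 n, y ∈ orbU G K 0 n' := by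
    intro n n' hn y hy
    obtain ⟨j, h0, hj, r⟩ := mem_orbU.1 hy
    exact mem_orbU.2 ⟨j, h0, hj.trans hn, r⟩
  obtain ⟨n1, y1, hy1, hy1S⟩ := hchord S1 c1 c2
  obtain ⟨n2, y2, hy2, hy2S⟩ := hchord S2 c3 c4
  have l1 : n1 ≤ max n1 n2 := le_max_left _ _
  have l2 : n2 ≤ max n1 n2 := le_max_right _ _
  obtain ⟨δ, hδ⟩ : ∃ δ, δ = S1 0 * S2 1 - S1 1 * S2 0 := ⟨_, rfl⟩
  rw [← hδ] at hdet
  obtain ⟨s, hs⟩ : ∃ s : E 2 →L[ℝ] ℝ, ∀ z, s z = (z 0 * S2 1 - z 1 * S2 0) / δ :=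
    ⟨lin (S2 1 / δ) (-S2 0 / δ), fun z => by rw [lin_apply]; ring⟩
  obtain ⟨t, ht⟩ : ∃ t : E 2 →L[ℝ] ℝ, ∀ z, t z = (S1 0 * z 1 - S1 1 * z 0) / δ :=
    ⟨lin (-S1 1 / δ) (S1 0 / δ), fun z => by rw [lin_apply]; ring⟩
  have hdec : ∀ z, z = s z • S1 + t z • S2 := by
    intro z
    have g0 : z 0 = s z * S1 0 + t z * S2 0 := by
      rw [hs, ht]; field_simp; rw [hδ]; ring
    have g1 : z 1 = s z * S1 1 + t z * S2 1 := by
      rw [hs, ht]; field_simp; rw [hδ]; ring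
    ext i; fin_cases i
    · simpa using g0
    · simpa using g1
  have main : ∀ (f : E 2 →L[ℝ] ℝ) (c : ℝ), (∀ ρ ∈ rotRel (⇑G) Uh, f ρ ≤ c) →
      ∀ ρ ∈ rotSet (⇑G), f ρ ≤ c := by
    intro f c hfc ρ hρ
    refine le_of_forall_pos_le_add fun ε hε => ?_
    have hb := unif_bound_closure hGc Uh f _ (unif_bound hM Uh f c hfc ε hε)
    rw [← hKd] at hb
    obtain ⟨Cst, N, hN⟩ := global_bound G hp M hM K hK hKc hm (max n1 n2) S1 S2 hS1 hS2
      ⟨y1, horb _ _ l1 _ hy1, horb _ _ l1 _ hy1S⟩ ⟨y2, horb _ _ l2 _ hy2, horb _ _ l2 _ hy2S⟩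
      s t (by rw [hs, ← hδ, div_self hdet]) (by rw [hs]; ring) (by rw [ht]; ring)
      (by rw [ht, ← hδ, div_self hdet]) hdec f (c + ε) hb
    exact rotRel_le_of_bound Set.univ f (c + ε) Cst N (fun m hm z _ => hN m hm z) ρ hρ
  refine Set.Subset.antisymm ?_ (hrot ▸ hsub)
  intro ρ hρ
  have m1 := main h (lam * sdot v v) (fun ρ hρ => (hrotmem ρ hρ).1.le) ρ hρ
  have m2 := main (-h) (-(lam * sdot v v))
    (fun ρ hρ => by rw [neg_apply, (hrotmem ρ hρ).1]) ρ hρ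
  have m3 := main (pd - b • h) 0
    (fun ρ hρ => by have := (hrotmem ρ hρ).2.2; simp; linarith) ρ hρ
  have m4 := main (a • h - pd) 0
    (fun ρ hρ => by have := (hrotmem ρ hρ).2.1; simp; linarith) ρ hρ
  simp [hh, hpd] at m1 m2 m3 m4
  refine ⟨le_antisymm m1 m2, ?_, ?_⟩ <;> linarith
end
end

section
/- Let G : ℝ² → ℝ² be a lift of a homeomorphism g of the two-torus homotopic to the identity, let Û ⊆ ℝ² be bounded and connected with G(Û) ∩ Û ≠ ∅, and let v ∈ ℝ² \ {0}. If ρ_Û(G) is a line segment of positive length contained in the line ℝ·v through the origin, then ρ(G) ⊆ ℝ·v. -/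
noncomputable section
open Filter Topology Metric Set MeasureTheory

lemma cos_pos_window (φ : ℝ → ℝ) (hφ : Continuous φ) (hs : ∀ s, 0 < Real.cos (φ s)) :
    ∃ k : ℤ, ∀ s, |φ s - 2 * Real.pi * k| < Real.pi / 2 := by
  have hpi := Real.pi_pos
  refine ⟨round (φ 0 / (2 * Real.pi)), ?_⟩
  set k := round (φ 0 / (2 * Real.pi)) with hk
  have hcos : ∀ s, Real.cos (φ s - 2 * Real.pi * k) = Real.cos (φ s) := by
    intro s
    have := Real.cos_sub_int_mul_two_pi (φ s) k
    rw [← this]; congr 1; ring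
  have h0 : |φ 0 - 2 * Real.pi * k| ≤ Real.pi := by
    have h1 := abs_sub_round (φ 0 / (2 * Real.pi))
    rw [← hk] at h1
    have h2 : φ 0 - 2 * Real.pi * k = (2 * Real.pi) * (φ 0 / (2 * Real.pi) - k) := by
      field_simp
    rw [h2, abs_mul, abs_of_pos (by positivity)]
    nlinarith
  have h0' : |φ 0 - 2 * Real.pi * k| < Real.pi / 2 := by
    by_contra hcon
    push Not at hcon
    have h3 := Real.cos_nonpos_of_pi_div_two_le_of_le hcon (by linarith)
    rw [Real.cos_abs, hcos] at h3
    linarith [hs 0]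
  intro s
  by_contra hcon
  push Not at hcon
  have hc : Continuous fun s => |φ s - 2 * Real.pi * k| := by fun_prop
  have := mem_range_of_exists_le_of_exists_ge hc ⟨0, h0'.le⟩ ⟨s, hcon⟩
  obtain ⟨r, hr⟩ := this
  have h4 : Real.cos (|φ r - 2 * Real.pi * k|) = 0 := by
    simp only at hr
    rw [hr, Real.cos_pi_div_two]
  rw [Real.cos_abs, hcos] at h4
  linarith [hs r]

lemma int_eq_of_bound (a b : ℤ) (x : ℝ) (j : ℝ) (i : ℤ)
    (h1 : |x + j - 2 * Real.pi * a| < Real.pi / 2)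
    (h2 : |x + (j + Real.pi / 2 + 2 * Real.pi * i) - 2 * Real.pi * b| < Real.pi / 2) :
    b = a + i := by
  have hpi := Real.pi_pos
  rw [abs_lt] at h1 h2
  have h3 : (2 * Real.pi) * ((b : ℝ) - a - i) < (2 * Real.pi) * 1 := by nlinarith
  have h4 : (2 * Real.pi) * (-1) < (2 * Real.pi) * ((b : ℝ) - a - i) := by nlinarith
  have h5 := lt_of_mul_lt_mul_left h3 (by positivity)
  have h6 := lt_of_mul_lt_mul_left h4 (by positivity)
  have h7 : b - a - i < 1 := by exact_mod_cast h5
  have h8 : -1 < b - a - i := by exact_mod_cast h6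
  omega

lemma no_nonvanishing (f : ℝ × ℝ → ℂ) (hf : Continuous f) (hne : ∀ x, f x ≠ 0)
    (h1 : ∀ s, 0 < (f (s, 0)).re) (h2 : ∀ s, (f (s, 1)).re < 0)
    (h3 : ∀ t, 0 < (f (0, t)).im) (h4 : ∀ t, (f (1, t)).im < 0) : False := by
  obtain ⟨L, hL, hexp⟩ : ∃ L : ℝ × ℝ → ℂ, Continuous L ∧ ∀ x, Complex.exp (L x) = f x := by
    have := Complex.isCoveringMap_exp.existsUnique_continuousMap_lifts
      (⟨fun x => ⟨f x, hne x⟩, by fun_prop⟩ : C(ℝ × ℝ, {z : ℂ // z ≠ 0})) (0 : ℝ × ℝ)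
      (Complex.log (f 0)) (by
        apply Subtype.ext
        simp [Complex.exp_log (hne 0)])
    obtain ⟨F, ⟨-, hF⟩, -⟩ := this
    refine ⟨F, F.continuous, fun x => ?_⟩
    exact congrArg Subtype.val (congrFun hF x)
  have hre : ∀ x, (f x).re = Real.exp (L x).re * Real.cos (L x).im := by
    intro x; rw [← hexp, Complex.exp_re]
  have him : ∀ x, (f x).im = Real.exp (L x).re * Real.sin (L x).im := by
    intro x; rw [← hexp, Complex.exp_im]
  have c1 : ∀ s, 0 < Real.cos ((L (s, 0)).im + 0) := by
    intro s; have := h1 s; rw [hre] at this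
    rw [add_zero]
    exact pos_of_mul_pos_right this (Real.exp_pos _).le
  have c2 : ∀ t, 0 < Real.cos ((L (1, t)).im + Real.pi / 2) := by
    intro t; have := h4 t; rw [him] at this
    rw [Real.cos_add_pi_div_two]
    have := Real.exp_pos (L (1, t)).re
    by_contra hc
    nlinarith
  have c3 : ∀ s, 0 < Real.cos ((L (s, 1)).im + Real.pi) := by
    intro t; have := h2 t; rw [hre] at this
    rw [Real.cos_add_pi]
    have := Real.exp_pos (L (t, 1)).re
    by_contra hc
    nlinarith
  have c4 : ∀ t, 0 < Real.cos ((L (0, t)).im - Real.pi / 2) := by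
    intro t; have := h3 t; rw [him] at this
    rw [Real.cos_sub_pi_div_two]
    exact pos_of_mul_pos_right this (Real.exp_pos _).le
  obtain ⟨k1, d1⟩ := cos_pos_window _ (by fun_prop) c1
  obtain ⟨k2, d2⟩ := cos_pos_window _ (by fun_prop) c2
  obtain ⟨k3, d3⟩ := cos_pos_window _ (by fun_prop) c3
  obtain ⟨k4, d4⟩ := cos_pos_window _ (by fun_prop) c4
  have e1 := int_eq_of_bound k1 k2 (L (1, 0)).im 0 0 (d1 1)
    (by convert d2 0 using 3; push_cast; ring)
  have e2 := int_eq_of_bound k2 k3 (L (1, 1)).im (Real.pi / 2) 0 (d2 1)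
    (by convert d3 1 using 3; push_cast; ring)
  have e3 := int_eq_of_bound k3 k4 (L (0, 1)).im Real.pi (-1) (d3 0)
    (by convert d4 1 using 3; push_cast; ring)
  have e4 := int_eq_of_bound k4 k1 (L (0, 0)).im (-(Real.pi / 2)) 0
    (by convert d4 0 using 3; ring)
    (by convert d1 0 using 3; push_cast; ring)
  omega

lemma crossing (X Y : E 2 →L[ℝ] ℝ) (hXY : ∀ z, X z = 0 → Y z = 0 → z = 0)
    (K : Set (E 2)) (hK : IsPreconnected K) (p q : E 2) (hp : p ∈ K) (hq : q ∈ K) (h : ℝ)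
    (hKh : ∀ z ∈ K, |Y z| ≤ h) (γ : ℝ → E 2) (hγ : Continuous γ)
    (h0 : h < Y (γ 0)) (h1 : Y (γ 1) < -h)
    (hpX : ∀ s ∈ Icc (0 : ℝ) 1, X p < X (γ s)) (hqX : ∀ s ∈ Icc (0 : ℝ) 1, X (γ s) < X q) :
    ∃ s ∈ Icc (0 : ℝ) 1, γ s ∈ K := by
  by_contra hcon
  push Not at hcon
  set h' := min (Y (γ 0)) (-Y (γ 1)) with hh'
  have hlt : h < h' := lt_min h0 (by linarith)
  set O : Set (E 2) := {z | |Y z| < h'} ∩ (γ '' Icc (0 : ℝ) 1)ᶜ with hO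
  have hOo : IsOpen O := by
    apply IsOpen.inter
    · exact isOpen_lt (by fun_prop) continuous_const
    · exact (isCompact_Icc.image hγ).isClosed.isOpen_compl
  have hKO : K ⊆ O := by
    intro z hz
    refine ⟨lt_of_le_of_lt (hKh z hz) hlt, ?_⟩
    rintro ⟨s, hs, rfl⟩
    exact hcon s hs hz
  have hC : IsConnected (connectedComponentIn O p) :=
    isConnected_connectedComponentIn_iff.2 (hKO hp)
  have hCP := (hOo.connectedComponentIn.isConnected_iff_isPathConnected).1 hC
  have hsub := hK.subset_connectedComponentIn hp hKO
  obtain ⟨δ, hδ⟩ := hCP.joinedIn p (hsub hp) q (hsub hq)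
  have hδO : ∀ t : ℝ, δ.extend t ∈ O := fun t =>
    connectedComponentIn_subset _ _ (hδ _)
  have hδc : Continuous δ.extend := δ.continuous_extend
  have hpj : Continuous fun s : ℝ => (projIcc (0 : ℝ) 1 zero_le_one s : ℝ) :=
    continuous_subtype_val.comp continuous_projIcc
  set η : ℝ → E 2 := fun s => γ (projIcc (0 : ℝ) 1 zero_le_one s) with hη
  have hηc : Continuous η := hγ.comp hpj
  have hη0 : η 0 = γ 0 := by simp [hη]
  have hη1 : η 1 = γ 1 := by simp [hη]
  refine no_nonvanishing (fun x => ⟨X (η x.1 - δ.extend x.2), Y (η x.1 - δ.extend x.2)⟩) ?_ ?_ ?_ ?_ ?_ ?_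
  · have : (fun x : ℝ × ℝ => (⟨X (η x.1 - δ.extend x.2), Y (η x.1 - δ.extend x.2)⟩ : ℂ)) =
      fun x => ((X (η x.1 - δ.extend x.2) : ℝ) : ℂ) + ((Y (η x.1 - δ.extend x.2) : ℝ) : ℂ) * Complex.I := by
      funext x; apply Complex.ext <;> simp
    rw [this]
    have hs : Continuous fun x : ℝ × ℝ => η x.1 - δ.extend x.2 :=
      (hηc.comp continuous_fst).sub (hδc.comp continuous_snd)
    exact (Complex.continuous_ofReal.comp (X.continuous.comp hs)).add
      ((Complex.continuous_ofReal.comp (Y.continuous.comp hs)).mul continuous_const)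
  · intro x hx
    have hx1 := congrArg Complex.re hx
    have hx2 := congrArg Complex.im hx
    have := hXY _ hx1 hx2
    have hm := (hδO x.2).2
    rw [← sub_eq_zero.1 this] at hm
    exact hm ⟨_, (projIcc (0 : ℝ) 1 zero_le_one x.1).2, rfl⟩
  · intro s
    have := hpX _ (projIcc (0 : ℝ) 1 zero_le_one s).2
    simp only [map_sub, Path.extend_zero, hη]
    linarith
  · intro s
    have := hqX _ (projIcc (0 : ℝ) 1 zero_le_one s).2
    simp only [map_sub, Path.extend_one, hη]
    linarith
  · intro t
    have h5 : |Y (δ.extend t)| < h' := (hδO t).1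
    have h6 := (abs_lt.1 h5).2
    have := min_le_left (Y (γ 0)) (-Y (γ 1))
    simp only [map_sub, hη0]
    linarith
  · intro t
    have h5 : |Y (δ.extend t)| < h' := (hδO t).1
    have h6 := (abs_lt.1 h5).1
    have := min_le_right (Y (γ 0)) (-Y (γ 1))
    simp only [map_sub, hη1]
    linarith

lemma exists_lat (z t : E 2) : ∃ m ∈ ZLat 2, ‖z + m - t‖ ≤ 2 := by
  refine ⟨!₂[(⌊t 0 - z 0⌋ : ℝ), (⌊t 1 - z 1⌋ : ℝ)], ?_, ?_⟩
  · intro i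
    fin_cases i
    · exact ⟨⌊t 0 - z 0⌋, by simp⟩
    · exact ⟨⌊t 1 - z 1⌋, by simp⟩
  · rw [EuclideanSpace.norm_eq, Fin.sum_univ_two]
    apply Real.sqrt_le_iff.2
    refine ⟨by norm_num, ?_⟩
    have a1 := Int.floor_le (t 0 - z 0)
    have a2 := Int.lt_floor_add_one (t 0 - z 0)
    have a3 := Int.floor_le (t 1 - z 1)
    have a4 := Int.lt_floor_add_one (t 1 - z 1)
    simp only [Real.norm_eq_abs, sq_abs, PiLp.sub_apply, PiLp.add_apply]
    simp
    nlinarith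

lemma disp_bound (G : E 2 → E 2) (hG : Continuous G)
    (hper : ∀ z, ∀ m ∈ ZLat 2, G (z + m) = G z + m) :
    ∃ M, 0 ≤ M ∧ ∀ n z, ‖G^[n] z - z‖ ≤ n * M := by
  obtain ⟨M, hM⟩ := (isCompact_closedBall (0 : E 2) 2).exists_bound_of_continuousOn
    (f := fun z => G z - z) (by fun_prop)
  have h1 : ∀ z, ‖G z - z‖ ≤ M := by
    intro z
    obtain ⟨m, hm, hz⟩ := exists_lat z 0
    have := hM (z + m) (by simpa using hz)
    simp only [hper z m hm] at this
    simpa using this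
  refine ⟨M, (norm_nonneg _).trans (h1 0), ?_⟩
  intro n z
  induction n with
  | zero => simp
  | succ n ih =>
    rw [Function.iterate_succ_apply']
    calc ‖G (G^[n] z) - z‖ = ‖(G (G^[n] z) - G^[n] z) + (G^[n] z - z)‖ := by congr 1; abel
      _ ≤ _ := norm_add_le _ _
      _ ≤ M + n * M := add_le_add (h1 _) ih
      _ = _ := by push_cast; ring

lemma iter_per (G : E 2 → E 2)
    (hper : ∀ z, ∀ m ∈ ZLat 2, G (z + m) = G z + m) (n : ℕ) (z m : E 2) (hm : m ∈ ZLat 2) :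
    G^[n] (z + m) = G^[n] z + m := by
  induction n with
  | zero => simp
  | succ n ih => rw [Function.iterate_succ_apply', Function.iterate_succ_apply', ih, hper _ _ hm]

lemma strip (G : E 2 → E 2) (M : ℝ) (hM0 : 0 ≤ M) (hM : ∀ n z, ‖G^[n] z - z‖ ≤ n * M)
    (U : Set (E 2)) (Y : E 2 →L[ℝ] ℝ) (hY : ∀ ρ ∈ rotRel G U, Y ρ = 0) (ε : ℝ) (hε : 0 < ε) :
    ∃ N : ℕ, ∀ k ≥ N, ∀ u ∈ U, |Y (G^[k] u - u)| ≤ ε * k := by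
  by_contra hcon
  push Not at hcon
  choose k hk u hu hlt using hcon
  have hkt : Tendsto k atTop atTop := tendsto_atTop_mono hk tendsto_id
  set s : ℕ → E 2 := fun i => (k i : ℝ)⁻¹ • (G^[k i] (u i) - u i) with hs
  have hb : ∀ i, s i ∈ closedBall (0 : E 2) M := by
    intro i
    rw [mem_closedBall_zero_iff, hs]
    simp only
    rw [norm_smul, norm_inv, Real.norm_natCast]
    rcases Nat.eq_zero_or_pos (k i) with h0 | h0
    · simp [h0, hM0]
    · have : (0 : ℝ) < k i := by exact_mod_cast h0
      rw [inv_mul_le_iff₀ this]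
      exact hM _ _
  obtain ⟨ρ, -, φ, hφ, hlim⟩ := (isCompact_closedBall (0 : E 2) M).tendsto_subseq hb
  have hρ : ρ ∈ rotRel G U :=
    ⟨k ∘ φ, u ∘ φ, hkt.comp hφ.tendsto_atTop, fun i => hu _, hlim⟩
  have h1 : Tendsto (fun i => |Y (s (φ i))|) atTop (𝓝 |Y ρ|) :=
    ((Y.continuous.abs).tendsto ρ).comp hlim
  rw [hY ρ hρ, abs_zero] at h1
  have h2 := (h1.eventually (gt_mem_nhds hε)).and (hφ.tendsto_atTop.eventually_ge_atTop 1)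
  obtain ⟨i, hi, hi1⟩ := h2.exists
  have h3 : (0 : ℝ) < k (φ i) := by exact_mod_cast lt_of_lt_of_le hi1 (hk _)
  simp only [hs, map_smul, smul_eq_mul, abs_mul, abs_inv, Nat.abs_cast] at hi
  rw [inv_mul_lt_iff₀ h3] at hi
  have := hlt (φ i)
  linarith

lemma pigeon (G : E 2 → E 2) (M : ℝ) (hM0 : 0 ≤ M) (hM : ∀ n z, ‖G^[n] z - z‖ ≤ n * M)
    (Y : E 2 →L[ℝ] ℝ) (w : E 2) (hw : w ∈ rotSet G) (hYw : 0 < Y w) (m : ℕ) (hm : 0 < m) :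
    ∃ z, m * (Y w / 2) ≤ Y (G^[m] z - z) := by
  by_contra hcon
  push Not at hcon
  set b := Y w / 2 with hb
  have hb0 : 0 < b := by positivity
  have h1 : ∀ (q : ℕ) z, Y (G^[m * q] z - z) ≤ (m * q : ℝ) * b := by
    intro q z
    induction q with
    | zero => simp
    | succ q ih =>
      have h2 := hcon (G^[m * q] z)
      rw [← Function.iterate_add_apply] at h2
      have : m * (q + 1) = m + m * q := by ring
      rw [this]
      rw [map_sub] at h2 ih ⊢
      push_cast
      linarith
  have h2 : ∀ (n : ℕ) z, Y (G^[n] z - z) ≤ n * b + ‖Y‖ * (m * M) := by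
    intro n z
    have e : n = n % m + m * (n / m) := (Nat.mod_add_div n m).symm
    have h3 := h1 (n / m) z
    have h4 := hM (n % m) (G^[m * (n / m)] z)
    rw [← Function.iterate_add_apply, ← e] at h4
    have h5 := (le_abs_self _).trans (Y.le_opNorm (G^[n] z - G^[m * (n / m)] z))
    have h6 : ((n % m : ℕ) : ℝ) ≤ m := by exact_mod_cast (Nat.mod_lt n hm).le
    have h7 : ‖Y‖ * ‖G^[n] z - G^[m * (n / m)] z‖ ≤ ‖Y‖ * (m * M) := by
      gcongr
      exact h4.trans (by gcongr)
    have h8 : (m : ℝ) * ((n / m : ℕ) : ℝ) ≤ n := by exact_mod_cast Nat.mul_div_le n m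
    have h9 := mul_le_mul_of_nonneg_right h8 hb0.le
    rw [map_sub] at h3 h5 ⊢
    linarith
  obtain ⟨n, z, hn, -, hlim⟩ := hw
  have hlim2 := (Y.continuous.tendsto w).comp hlim
  have hn' : Tendsto (fun i => (n i : ℝ)) atTop atTop := tendsto_natCast_atTop_atTop.comp hn
  have hlim3 : Tendsto (fun i => b + ‖Y‖ * (m * M) * (n i : ℝ)⁻¹) atTop (𝓝 (b + ‖Y‖ * (m * M) * 0)) :=
    tendsto_const_nhds.add (hn'.inv_tendsto_atTop.const_mul _)
  have := le_of_tendsto_of_tendsto hlim2 hlim3 (by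
    filter_upwards [hn.eventually_ge_atTop 1] with i hi
    have h3 : (0 : ℝ) < n i := by exact_mod_cast hi
    simp only [Function.comp, map_smul, smul_eq_mul]
    rw [inv_mul_le_iff₀ h3]
    have := h2 (n i) (z i)
    have e : (n i : ℝ) * (b + ‖Y‖ * (m * M) * (n i : ℝ)⁻¹) = n i * b + ‖Y‖ * (m * M) := by
      field_simp
    rw [e]; exact this)
  linarith

lemma chain (G : E 2 → E 2) (hG : Continuous G) (U : Set (E 2)) (hU : IsConnected U)
    (hmeet : (G '' U ∩ U).Nonempty) (n : ℕ) :
    ∃ V : Set (E 2), IsPreconnected V ∧ U ⊆ V ∧ G^[n] '' U ⊆ V ∧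
      ∀ x ∈ V, ∃ k ≤ n, ∃ u ∈ U, x = G^[k] u := by
  induction n with
  | zero => exact ⟨U, hU.isPreconnected, subset_rfl, by simp, fun x hx => ⟨0, le_rfl, x, hx, rfl⟩⟩
  | succ n ih =>
    obtain ⟨V, hV, hUV, hnV, hVk⟩ := ih
    obtain ⟨y, ⟨u, hu, rfl⟩, hy⟩ := hmeet
    refine ⟨V ∪ G^[n + 1] '' U, ?_, hUV.trans subset_union_left, subset_union_right, ?_⟩
    · refine hV.union (G^[n] (G u)) (hnV ⟨_, hy, rfl⟩) ⟨u, hu, rfl⟩ ?_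
      exact hU.isPreconnected.image _ (hG.iterate _).continuousOn
    · rintro x (hx | ⟨u, hu, rfl⟩)
      · obtain ⟨k, hk, r⟩ := hVk x hx
        exact ⟨k, by omega, r⟩
      · exact ⟨n + 1, le_rfl, u, hu, rfl⟩

set_option maxHeartbeats 2000000 in
lemma core (G : E 2 ≃ₜ E 2) (hper : ∀ z, ∀ m ∈ ZLat 2, G (z + m) = G z + m)
    (U : Set (E 2)) (hUb : Bornology.IsBounded U) (hUc : IsConnected U)
    (hmeet : ((⇑G) '' U ∩ U).Nonempty)
    (X Y : E 2 →L[ℝ] ℝ) (hXY : ∀ z, X z = 0 → Y z = 0 → z = 0)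
    (e1 e2 : E 2) (hX1 : X e1 = 1) (hX2 : X e2 = 0) (hY1 : Y e1 = 0) (hY2 : Y e2 = 1)
    (hY : ∀ ρ ∈ rotRel G U, Y ρ = 0) (ρ : E 2) (hρ : ρ ∈ rotRel G U) (hXρ : 0 < X ρ)
    (w : E 2) (hw : w ∈ rotSet G) (hYw : 0 < Y w) : False := by
  obtain ⟨M, hM0, hM⟩ := disp_bound G G.continuous hper
  set c : ℝ := ‖X‖ + ‖Y‖ with hc
  have hc0 : 0 ≤ c := by positivity
  have hXc : ∀ z, |X z| ≤ c * ‖z‖ := fun z => (X.le_opNorm z).trans (by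
    gcongr; rw [hc]; linarith [norm_nonneg Y])
  have hYc : ∀ z, |Y z| ≤ c * ‖z‖ := fun z => (Y.le_opNorm z).trans (by
    gcongr; rw [hc]; linarith [norm_nonneg X])
  obtain ⟨B0, hB0⟩ := hUb.exists_norm_le
  set B := c * B0 with hB
  have hXB : ∀ u ∈ U, |X u| ≤ B := fun u hu => (hXc u).trans (mul_le_mul_of_nonneg_left (hB0 u hu) hc0)
  have hYB : ∀ u ∈ U, |Y u| ≤ B := fun u hu => (hYc u).trans (mul_le_mul_of_nonneg_left (hB0 u hu) hc0)
  set S := c * M + 1 with hS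
  have hS0 : 0 < S := by positivity
  have hXS : ∀ n z, |X (G^[n] z) - X z| ≤ n * S := by
    intro n z
    rw [← map_sub]
    have := mul_le_mul_of_nonneg_left (hM n z) hc0
    have h2 : (0:ℝ) ≤ n := n.cast_nonneg
    refine (hXc _).trans (this.trans ?_)
    rw [hS]; linarith
  have hYS : ∀ n z, |Y (G^[n] z) - Y z| ≤ n * S := by
    intro n z
    rw [← map_sub]
    have := mul_le_mul_of_nonneg_left (hM n z) hc0
    have h2 : (0:ℝ) ≤ n := n.cast_nonneg
    refine (hYc _).trans (this.trans ?_)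
    rw [hS]; linarith
  set a := X ρ with ha
  set b := Y w / 2 with hb
  have hb0 : 0 < b := by positivity
  set κ := min 1 (a / (32 * S)) with hκ
  have hκ0 : 0 < κ := lt_min one_pos (by positivity)
  have hκ1 : κ ≤ 1 := min_le_left _ _
  have hκS : κ * S ≤ a / 32 := by
    have : κ ≤ a / (32 * S) := min_le_right _ _
    calc κ * S ≤ a / (32 * S) * S := by gcongr
      _ = a / 32 := by field_simp
  set ε := b * κ / 32 with hε
  have hε0 : 0 < ε := by positivity
  obtain ⟨N, hN⟩ := strip G M hM0 hM U Y hY ε hε0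
  set C := B + N * S with hC
  have hstrip : ∀ k, ∀ u ∈ U, |Y (G^[k] u)| ≤ ε * k + C := by
    intro k u hu
    have hu1 := hYB u hu
    have hk0 : (0:ℝ) ≤ ε * k := by positivity
    have hN0 : (0:ℝ) ≤ N * S := by positivity
    have h2 : |Y (G^[k] u)| ≤ |Y (G^[k] u) - Y u| + |Y u| := by
      have := abs_add_le (Y (G^[k] u) - Y u) (Y u)
      simpa using this
    rcases le_total N k with h | h
    · have := hN k h u hu
      rw [map_sub] at this
      linarith
    · have := hYS k u
      have h3 : (k:ℝ) * S ≤ N * S := by gcongr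
      linarith
  set D := c * 2 with hD
  have hD0 : 0 ≤ D := by positivity
  obtain ⟨ns, us, hns, hus, hlim⟩ := hρ
  have hnsR : Tendsto (fun i => (ns i : ℝ)) atTop atTop := tendsto_natCast_atTop_atTop.comp hns
  have hXlim := (X.continuous.tendsto ρ).comp hlim
  have hev : ∀ᶠ x : ℝ in atTop, b + 2 * C + 2 * D + 1 < x * (7 / 8 * (b * κ)) ∧
      B + D < x * (3 / 16 * a) ∧ 1 / κ + 1 < x :=
    ((tendsto_id.atTop_mul_const (by positivity)).eventually_gt_atTop _).and
      (((tendsto_id.atTop_mul_const (by positivity)).eventually_gt_atTop _).and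
        (eventually_gt_atTop _))
  have hev2 := (hXlim.eventually (lt_mem_nhds (show a / 2 < X ρ by linarith))).and
    (hnsR.eventually hev)
  obtain ⟨i, hi1, hi2, hi3, hi4⟩ := hev2.exists
  set n := ns i
  set u := us i
  have hu : u ∈ U := hus i
  have hκinv : 0 < 1 / κ := by positivity
  have hn0 : (0:ℝ) < n := by linarith
  simp only [Function.comp, map_smul, smul_eq_mul] at hi1
  rw [lt_inv_mul_iff₀ hn0, map_sub] at hi1
  set m := ⌊κ * n⌋₊ with hm
  have hm1 : (m:ℝ) ≤ κ * n := Nat.floor_le (by positivity)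
  have hm2 : κ * n < m + 1 := Nat.lt_floor_add_one _
  have hmpos : 0 < m := by
    apply Nat.floor_pos.2
    have : 1 / κ < n := by linarith
    rw [div_lt_iff₀ hκ0] at this
    linarith
  have hmn : (m:ℝ) ≤ n := hm1.trans (by nlinarith)
  have hmS : (m:ℝ) * S ≤ a * n / 32 := by
    calc (m:ℝ) * S ≤ κ * n * S := by gcongr
      _ = (κ * S) * n := by ring
      _ ≤ a / 32 * n := by gcongr
      _ = _ := by ring
  have hmS0 : 0 ≤ (m:ℝ) * S := by positivity
  set h := ε * (n + m) + C with hh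
  have hh1 : h ≤ 2 * (ε * n) + C := by
    have := mul_le_mul_of_nonneg_left hmn hε0.le
    rw [hh]; linarith
  obtain ⟨z0, hz0⟩ := pigeon G M hM0 hM Y w hw hYw m hmpos
  obtain ⟨l, hl, hzl⟩ := exists_lat z0 ((a * n / 4) • e1 - (h + D + 1) • e2)
  set z := z0 + l with hz
  have hFz : G^[m] z = G^[m] z0 + l := iter_per G hper m z0 l hl
  have hYz : m * b ≤ Y (G^[m] z) - Y z := by
    rw [hFz, hz, ← map_sub]
    simpa [hb] using hz0
  have hzX := (hXc (z - ((a * n / 4) • e1 - (h + D + 1) • e2))).trans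
    (mul_le_mul_of_nonneg_left hzl hc0)
  have hzY := (hYc (z - ((a * n / 4) • e1 - (h + D + 1) • e2))).trans
    (mul_le_mul_of_nonneg_left hzl hc0)
  simp only [map_sub, map_smul, smul_eq_mul, hX1, hX2, hY1, hY2] at hzX hzY
  rw [← hD, abs_le] at hzX hzY
  obtain ⟨V, hV, hUV, hnV, hVk⟩ := chain G G.continuous U hUc hmeet n
  have hFc : Continuous (G^[m]) := G.continuous.iterate m
  set γ : ℝ → E 2 := fun s => G^[m] (z - (s * (m * S)) • e2) with hγ
  have hγX : ∀ s, |X (γ s) - X z| ≤ m * S := by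
    intro s
    have := hXS m (z - (s * (m * S)) • e2)
    simpa [hX2] using this
  obtain ⟨u0, hu0⟩ := hUc.nonempty
  have hbm : b * κ * n - b ≤ m * b := by nlinarith
  obtain ⟨s, hs, y, hy, hys⟩ := crossing X Y hXY (G^[m] '' V) (hV.image _ hFc.continuousOn)
    (G^[m] u0) (G^[m] (G^[n] u)) ⟨u0, hUV hu0, rfl⟩ ⟨_, hnV ⟨u, hu, rfl⟩, rfl⟩ h
    (by
      rintro _ ⟨y, hy, rfl⟩
      obtain ⟨k, hk, u', hu', rfl⟩ := hVk y hy
      rw [← Function.iterate_add_apply]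
      refine (hstrip _ u' hu').trans ?_
      have hk' : (k:ℝ) ≤ n := by exact_mod_cast hk
      rw [hh]; push_cast
      have := mul_le_mul_of_nonneg_left hk' hε0.le
      linarith)
    γ (hFc.comp (by fun_prop))
    (by
      simp only [hγ, zero_mul, zero_smul, sub_zero]
      have e : ε * n = b * κ * n / 32 := by rw [hε]; ring
      linarith [hzY.1])
    (by
      have := (abs_le.1 (hYS m (z - ((1:ℝ) * (m * S)) • e2))).2
      simp only [map_sub, map_smul, smul_eq_mul, hY2] at this
      simp only [hγ]
      linarith [hzY.2])
    (by
      intro s _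
      have h1 := (abs_le.1 (hγX s)).1
      have h2 := (abs_le.1 (hXS m u0)).2
      have h3 := (abs_le.1 (hXB u0 hu0)).2
      linarith [hzX.1])
    (by
      intro s _
      have h1 := (abs_le.1 (hγX s)).2
      have h2 := (abs_le.1 (hXS m (G^[n] u))).1
      have h3 := (abs_le.1 (hXB u hu)).1
      linarith [hzX.2])
  have hinj := G.injective.iterate m hys
  have hYy : -h ≤ Y y := by
    obtain ⟨k, hk, u', hu', rfl⟩ := hVk y hy
    have h1 := (abs_le.1 (hstrip k u' hu')).1
    have hk' : (k:ℝ) ≤ n := by exact_mod_cast hk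
    have := mul_le_mul_of_nonneg_left hk' hε0.le
    have : 0 ≤ ε * m := by positivity
    rw [hh]; linarith
  rw [hinj] at hYy
  simp only [map_sub, map_smul, smul_eq_mul, hY2] at hYy
  have : 0 ≤ s * (m * S) := mul_nonneg hs.1 hmS0
  linarith [hzY.2]

lemma mem_span_iff_pdot (v : E 2) (hv : v ≠ 0) (z : E 2) :
    z ∈ (Submodule.span ℝ {v} : Submodule ℝ (E 2)) ↔ pdot v z = 0 := by
  rw [Submodule.mem_span_singleton]
  constructor
  · rintro ⟨r, rfl⟩
    simp [pdot]; ring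
  · intro h
    unfold pdot at h
    by_cases h0 : v 0 = 0
    · have h1 : v 1 ≠ 0 := by
        intro h1; apply hv; ext i; fin_cases i <;> simp [h0, h1]
      refine ⟨z 1 / v 1, ?_⟩
      have hz : z 0 = 0 := by
        rw [h0] at h
        have : z 0 * v 1 = 0 := by linarith
        exact (mul_eq_zero.1 this).resolve_right h1
      ext i; fin_cases i
      · simp [h0, hz]
      · simp; field_simp
    · refine ⟨z 0 / v 0, ?_⟩
      ext i; fin_cases i
      · simp; field_simp
      · simp; field_simp; linarith

/-- **Lemma (segments through the origin confine the rotation set).**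
If `Û ⊆ ℝ²` is bounded and connected with `G(Û) ∩ Û ≠ ∅` and `ρ_Û(G)` is a line
segment of positive length contained in the line `ℝ·v`, then `ρ(G) ⊆ ℝ·v`. -/
theorem rotation_set_in_rational_line
    (G : E 2 ≃ₜ E 2) (g : T 2 ≃ₜ T 2) (hlift : IsLift G g)
    (Uh : Set (E 2)) (hUb : Bornology.IsBounded Uh) (hUc : IsConnected Uh)
    (hmeet : ((⇑G) '' Uh ∩ Uh).Nonempty)
    (v : E 2) (hv : v ≠ 0)
    (p q : E 2) (hpq : p ≠ q) (hseg : rotRel (⇑G) Uh = segment ℝ p q)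
    (hsub : rotRel (⇑G) Uh ⊆ (Submodule.span ℝ {v} : Submodule ℝ (E 2))) :
    rotSet (⇑G) ⊆ (Submodule.span ℝ {v} : Submodule ℝ (E 2)) := by
  intro w hw
  rw [SetLike.mem_coe, mem_span_iff_pdot v hv]
  by_contra hne
  have hvv : 0 < v 0 ^ 2 + v 1 ^ 2 := by
    by_contra hcon
    apply hv
    have h0 : v 0 = 0 := by nlinarith [sq_nonneg (v 0), sq_nonneg (v 1)]
    have h1 : v 1 = 0 := by nlinarith [sq_nonneg (v 0), sq_nonneg (v 1)]
    ext i; fin_cases i <;> simp [h0, h1]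
  obtain ⟨ρ, hρ, hρ0⟩ : ∃ ρ ∈ rotRel (⇑G) Uh, ρ ≠ 0 := by
    by_cases hp : p = 0
    · refine ⟨q, by rw [hseg]; exact right_mem_segment ℝ p q, ?_⟩
      rintro rfl; exact hpq hp
    · exact ⟨p, by rw [hseg]; exact left_mem_segment ℝ p q, hp⟩
  have hY : ∀ r ∈ rotRel (⇑G) Uh, pdot v r = 0 := fun r hr =>
    (mem_span_iff_pdot v hv r).1 (hsub hr)
  have hinj : ∀ z, sdot v z = 0 → pdot v z = 0 → z = 0 := by
    intro z h1 h2
    unfold sdot at h1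
    unfold pdot at h2
    have a0 : (v 0 ^ 2 + v 1 ^ 2) * z 0 = 0 := by linear_combination v 0 * h1 - v 1 * h2
    have a1 : (v 0 ^ 2 + v 1 ^ 2) * z 1 = 0 := by linear_combination v 1 * h1 + v 0 * h2
    have b0 := (mul_eq_zero.1 a0).resolve_left hvv.ne'
    have b1 := (mul_eq_zero.1 a1).resolve_left hvv.ne'
    ext i; fin_cases i <;> simp [b0, b1]
  have hXρ : sdot v ρ ≠ 0 := fun h => hρ0 (hinj ρ h (hY ρ hρ))
  obtain ⟨x, hx⟩ : ∃ x : ℝ, x = sdot v ρ := ⟨_, rfl⟩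
  obtain ⟨y, hy⟩ : ∃ y : ℝ, y = pdot v w := ⟨_, rfl⟩
  have hx0 : x ≠ 0 := by rw [hx]; exact hXρ
  have hy0 : y ≠ 0 := by rw [hy]; exact hne
  let X : E 2 →L[ℝ] ℝ :=
    (x * v 0) • EuclideanSpace.proj (0 : Fin 2) + (x * v 1) • EuclideanSpace.proj (1 : Fin 2)
  let Y : E 2 →L[ℝ] ℝ :=
    (y * v 0) • EuclideanSpace.proj (1 : Fin 2) - (y * v 1) • EuclideanSpace.proj (0 : Fin 2)
  have hXd : ∀ z, X z = x * sdot v z := by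
    intro z; simp [X, sdot]; ring
  have hYd : ∀ z, Y z = y * pdot v z := by
    intro z; simp [Y, pdot]; ring
  set d := v 0 ^ 2 + v 1 ^ 2 with hd
  have hd0 : d ≠ 0 := hvv.ne'
  refine core G hlift.2 Uh hUb hUc hmeet X Y ?_ !₂[v 0 / (x * d), v 1 / (x * d)]
    !₂[-v 1 / (y * d), v 0 / (y * d)] ?_ ?_ ?_ ?_ ?_ ρ hρ ?_ w hw ?_
  · intro z h1 h2
    rw [hXd] at h1; rw [hYd] at h2
    exact hinj z ((mul_eq_zero.1 h1).resolve_left hx0) ((mul_eq_zero.1 h2).resolve_left hy0)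
  · rw [hXd]; simp [sdot]; field_simp; rw [hd]
  · rw [hXd]; simp [sdot]; right; ring
  · rw [hYd]; simp [pdot]; right; ring
  · rw [hYd]; simp [pdot]; field_simp; rw [hd]; ring
  · intro r hr; rw [hYd, hY r hr, mul_zero]
  · rw [hXd, ← hx]; exact mul_self_pos.2 hx0
  · rw [hYd, ← hy]; exact mul_self_pos.2 hy0
end
end

section
/- Let ψ₁, ψ₂ : ℝ → ℝ be continuous 1-periodic functions with ψ₁(0) = ψ₂(0) = 0 and ψ₁(1/2) = ψ₂(1/2) = 1, and let F : ℝ² → ℝ², F(x,y) = (x + ψ₂(y + ψ₁(x)), y + ψ₁(x)). Then F is a lift of a homeomorphism of the two-torus homotopic to the identity; the points (0,0), (1/2,0), (0,1/2), (1/2,1/2) satisfy F(0,0) = (0,0), F(1/2,0) = (1/2,0) + (0,1), F(0,1/2) = (0,1/2) + (1,0), F(1/2,1/2) = (1/2,1/2) + (1,1), so that (0,0), (0,1), (1,0), (1,1) ∈ ρ(F); and consequently, since ρ(F) is convex, [0,1]² ⊆ ρ(F). -/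
noncomputable section
open Filter Topology Metric Set MeasureTheory

/-- The point `(a, b) ∈ ℝ²`. -/
def pt (a b : ℝ) : E 2 := (WithLp.equiv 2 (Fin 2 → ℝ)).symm ![a, b]

theorem mz_ivt {f : ℝ → ℝ} (hf : Continuous f) {a b c : ℝ} (hab : a ≤ b) (h0 : f a < c)
    (hne : ∀ t ∈ Icc a b, f t ≠ c) : f b < c := by
  by_contra h
  push Not at h
  obtain ⟨t, ht, h'⟩ := intermediate_value_Icc hab hf.continuousOn ⟨h0.le, h⟩
  exact hne t ht h'

theorem mz_lift (G : ℝ × ℝ → ℂ) (hG : Continuous G) (h0 : ∀ x, G x ≠ 0) :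
    ∃ θ : ℝ × ℝ → ℂ, Continuous θ ∧ ∀ x, Complex.exp (θ x) = G x := by
  obtain ⟨e, he⟩ : ∃ e, Complex.exp e = G 0 := ⟨Complex.log (G 0), Complex.exp_log (h0 0)⟩
  obtain ⟨θ, ⟨-, h⟩, -⟩ := Complex.isCoveringMapOn_exp.existsUnique_continuousMap_lifts
    (f := (⟨G, hG⟩ : C(ℝ × ℝ, ℂ))) (a₀ := 0) (e₀ := e) he (fun x => h0 x)
  exact ⟨θ, θ.continuous, fun x => congr_fun h x⟩

/-- The topological core: an arc in the upper half plane with end points on the real axis more than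
distance one apart meets its translate by one. -/
theorem mz_arc01 (p q : ℝ → ℝ) (hp : Continuous p) (hq : Continuous q) (q0 : q 0 = 0) (q1 : q 1 = 0)
    (hpos : ∀ t ∈ Icc (0 : ℝ) 1, 0 ≤ q t) (hlen : p 0 + 1 < p 1) :
    ∃ s ∈ Icc (0 : ℝ) 1, ∃ t ∈ Icc (0 : ℝ) 1, p s + 1 = p t ∧ q s = q t := by
  by_contra hcon
  push Not at hcon
  let c : ℝ → ℝ := fun t => max 0 (min t 1)
  have hc : Continuous c := by fun_prop
  have hcI : ∀ t, c t ∈ Icc (0 : ℝ) 1 := fun t =>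
    ⟨le_max_left _ _, max_le zero_le_one (min_le_right _ _)⟩
  have c0 : c 0 = 0 := by simp [c]
  have c1 : c 1 = 1 := by simp [c]
  let G : ℝ × ℝ → ℂ := fun x =>
    ((p (c x.1) + 1 - p (c x.2) : ℝ) : ℂ) + ((q (c x.1) - q (c x.2) : ℝ) : ℂ) * Complex.I
  have hGre : ∀ x, (G x).re = p (c x.1) + 1 - p (c x.2) := fun x => by simp [G]
  have hGim : ∀ x, (G x).im = q (c x.1) - q (c x.2) := fun x => by simp [G]
  have hG : Continuous G := by fun_prop
  have hG0 : ∀ x, G x ≠ 0 := by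
    intro x hx
    have h1 := hGre x
    have h2 := hGim x
    rw [hx] at h1 h2
    simp only [Complex.zero_re, Complex.zero_im] at h1 h2
    exact hcon _ (hcI x.1) _ (hcI x.2) (by linarith) (by linarith)
  obtain ⟨θ, hθ, hexp⟩ := mz_lift G hG hG0
  have hre : ∀ x, Real.exp (θ x).re * Real.cos (θ x).im = p (c x.1) + 1 - p (c x.2) := fun x => by
    rw [← hGre, ← hexp, Complex.exp_re]
  have him : ∀ x, Real.exp (θ x).re * Real.sin (θ x).im = q (c x.1) - q (c x.2) := fun x => by
    rw [← hGim, ← hexp, Complex.exp_im]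
  -- the angle at the origin of the diagonal
  have hpd : ∀ s, 0 < Real.cos (θ (s, s)).im ∧ Real.sin (θ (s, s)).im = 0 := by
    intro s
    have h1 := hre (s, s)
    have h2 := him (s, s)
    have he := Real.exp_pos (θ (s, s)).re
    simp only [sub_self, add_sub_cancel_left] at h1 h2
    refine ⟨by by_contra h; nlinarith, ?_⟩
    rcases mul_eq_zero.1 h2 with h | h
    · exact absurd h he.ne'
    · exact h
  have hcd : ∀ s, Real.cos (θ (s, s)).im = 1 := by
    intro s
    obtain ⟨h1, h2⟩ := hpd s
    have := Real.sin_sq_add_cos_sq (θ (s, s)).im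
    rw [h2] at this
    nlinarith
  set φ0 := (θ (0, 0)).im with hφ0
  have hs0 : Real.sin φ0 = 0 := (hpd 0).2
  have hc0 : Real.cos φ0 = 1 := hcd 0
  have hsin : ∀ x, Real.sin ((θ x).im - φ0) = Real.sin (θ x).im := fun x => by
    rw [Real.sin_sub, hs0, hc0]; ring
  have hcos : ∀ x, Real.cos ((θ x).im - φ0) = Real.cos (θ x).im := fun x => by
    rw [Real.cos_sub, hs0, hc0]; ring
  have hpi := Real.pi_pos
  have d1 : (θ (1, 1)).im - φ0 = 0 := by
    have A : (θ (1, 1)).im - φ0 < Real.pi := by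
      refine mz_ivt (f := fun s => (θ (s, s)).im - φ0) (by fun_prop) zero_le_one
        (by simpa [hφ0] using hpi) ?_
      intro t _ h
      have := hcos (t, t)
      rw [h, hcd, Real.cos_pi] at this
      norm_num at this
    have B : -((θ (1, 1)).im - φ0) < Real.pi := by
      refine mz_ivt (f := fun s => -((θ (s, s)).im - φ0)) (by fun_prop) zero_le_one
        (by simpa [hφ0] using hpi) ?_
      intro t _ h
      have := hcos (t, t)
      rw [← Real.cos_neg, h, hcd, Real.cos_pi] at this
      norm_num at this
    refine (Real.cos_eq_one_iff_of_lt_of_lt (by linarith) (by linarith)).1 ?_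
    rw [hcos, hcd]
  have e1 : (θ (0, 1)).im - φ0 < Real.pi / 2 := by
    refine mz_ivt (f := fun t => (θ (0, t)).im - φ0) (by fun_prop) zero_le_one
      (by simpa [hφ0] using hpi) ?_
    intro t _ h
    have h1 := hsin (0, t)
    have h2 := him (0, t)
    dsimp only at h h2
    rw [h, Real.sin_pi_div_two] at h1
    rw [← h1, c0, q0] at h2
    have := Real.exp_pos (θ (0, t)).re
    have := hpos _ (hcI t)
    linarith
  have e2 : -((θ (0, 1)).im - φ0) < Real.pi / 2 := by
    have := mz_ivt (f := fun s => -((θ (1 - s, 1)).im - φ0)) (a := 0) (b := 1) (c := Real.pi / 2)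
      (by fun_prop) zero_le_one (by simp [d1, hpi]) ?_
    · simpa using this
    intro t _ h
    have h1 := hsin (1 - t, 1)
    have h2 := him (1 - t, 1)
    dsimp only at h h2
    rw [neg_eq_iff_eq_neg] at h
    rw [h, Real.sin_neg, Real.sin_pi_div_two] at h1
    rw [← h1, c1, q1] at h2
    have := Real.exp_pos (θ (1 - t, 1)).re
    have := hpos _ (hcI (1 - t))
    linarith
  have h3 := Real.cos_pos_of_mem_Ioo (x := (θ (0, 1)).im - φ0) ⟨by linarith, e1⟩
  rw [hcos] at h3
  have h4 := hre (0, 1)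
  simp only [c0, c1] at h4
  have := mul_pos (Real.exp_pos (θ (0, 1)).re) h3
  linarith

theorem mz_arc (p q : ℝ → ℝ) (hp : Continuous p) (hq : Continuous q) {a b : ℝ} (hab : a ≤ b)
    (q0 : q a = 0) (q1 : q b = 0)
    (hpos : ∀ t ∈ Icc a b, 0 ≤ q t) (hlen : p a + 1 < p b) :
    ∃ s ∈ Icc a b, ∃ t ∈ Icc a b, p s + 1 = p t ∧ q s = q t := by
  have key : ∀ t ∈ Icc (0 : ℝ) 1, a + t * (b - a) ∈ Icc a b := by
    rintro t ⟨h0, h1⟩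
    constructor <;> nlinarith
  obtain ⟨s, hs, t, ht, h⟩ := mz_arc01 (fun t => p (a + t * (b - a))) (fun t => q (a + t * (b - a)))
    (by fun_prop) (by fun_prop) (by simpa using q0) (by simpa using q1)
    (fun t ht => hpos _ (key t ht)) (by simpa using hlen)
  exact ⟨_, key s hs, _, key t ht, h⟩

theorem mz_cross (p q : ℝ → ℝ) (hp : Continuous p) (hq : Continuous q)
    (q0 : q 0 = 0) (q1 : q 1 = 0) (p0 : p 0 ≤ 0) (p1 : 0 ≤ p 1)
    (hav : ∀ t ∈ Icc (0 : ℝ) 1, q t = 0 → ¬ (0 ≤ p t ∧ p t ≤ 1)) :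
    ∃ s ∈ Icc (0 : ℝ) 1, ∃ t ∈ Icc (0 : ℝ) 1, p s + 1 = p t ∧ q s = q t := by
  have hcl1 : IsClosed {t | q t = 0 ∧ p t ≤ 0} :=
    (isClosed_eq hq continuous_const).inter (isClosed_le hp continuous_const)
  have hcl2 : IsClosed {t | q t = 0 ∧ 0 ≤ p t} :=
    (isClosed_eq hq continuous_const).inter (isClosed_le continuous_const hp)
  obtain ⟨a, ⟨haI, haq, hap⟩, hamax⟩ := (isCompact_Icc (a := (0 : ℝ)) (b := 1)).inter_right hcl1
    |>.exists_isGreatest ⟨0, ⟨le_rfl, zero_le_one⟩, q0, p0⟩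
  obtain ⟨b, ⟨hbI, hbq, hbp⟩, hbmin⟩ := (isCompact_Icc (a := a) (b := 1)).inter_right hcl2
    |>.exists_isLeast ⟨1, ⟨haI.2, le_rfl⟩, q1, p1⟩
  have hb01 : b ∈ Icc (0 : ℝ) 1 := ⟨haI.1.trans hbI.1, hbI.2⟩
  have hsub : ∀ t ∈ Icc a b, t ∈ Icc (0 : ℝ) 1 := fun t ht =>
    ⟨haI.1.trans ht.1, ht.2.trans hbI.2⟩
  have hap' : p a < 0 := by
    by_contra h
    exact hav a haI haq ⟨by linarith, by linarith⟩
  have hbp' : 1 < p b := by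
    by_contra h
    exact hav b hb01 hbq ⟨hbp, by linarith⟩
  have hne : ∀ t ∈ Ioo a b, q t ≠ 0 := by
    intro t ht h
    have ht' := hsub t ⟨ht.1.le, ht.2.le⟩
    rcases le_total (p t) 0 with h1 | h1
    · exact absurd (hamax ⟨ht', h, h1⟩) (not_le.2 ht.1)
    · exact absurd (hbmin ⟨⟨ht.1.le, ht'.2⟩, h, h1⟩) (not_le.2 ht.2)
  have hsign : (∀ t ∈ Icc a b, 0 ≤ q t) ∨ (∀ t ∈ Icc a b, 0 ≤ - q t) := by
    by_contra hcon
    push Not at hcon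
    obtain ⟨⟨s, hs, hs'⟩, t, ht, ht'⟩ := hcon
    have hsI : s ∈ Ioo a b := by
      refine ⟨lt_of_le_of_ne hs.1 ?_, lt_of_le_of_ne hs.2 ?_⟩ <;> rintro rfl <;> linarith
    have htI : t ∈ Ioo a b := by
      refine ⟨lt_of_le_of_ne ht.1 ?_, lt_of_le_of_ne ht.2 ?_⟩ <;> rintro rfl <;> linarith
    obtain ⟨r, hr, hr'⟩ := isPreconnected_Ioo.intermediate_value hsI htI hq.continuousOn
      (show (0 : ℝ) ∈ Icc (q s) (q t) from ⟨hs'.le, by linarith⟩)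
    exact hne r hr hr'
  rcases hsign with h | h
  · obtain ⟨s, hs, t, ht, h⟩ := mz_arc p q hp hq hbI.1 haq hbq h (by linarith)
    exact ⟨s, hsub s hs, t, hsub t ht, h⟩
  · obtain ⟨s, hs, t, ht, h⟩ := mz_arc p (fun t => - q t) hp hq.neg hbI.1 (by simpa using haq)
      (by simpa using hbq) h (by linarith)
    exact ⟨s, hsub s hs, t, hsub t ht, h.1, neg_injective h.2⟩

theorem mz_pt0 (a b : ℝ) : pt a b 0 = a := rfl

theorem mz_pt1 (a b : ℝ) : pt a b 1 = b := rfl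

theorem mz_ext {x y : E 2} (h0 : x 0 = y 0) (h1 : x 1 = y 1) : x = y := by
  ext k
  fin_cases k
  · exact h0
  · exact h1

theorem mz_side (h : E 2 → E 2) (hc : Continuous h) (Q : Set (E 2)) (hQ : Convex ℝ Q)
    (i j : Fin 2) (w : E 2)
    (hinj : ∀ a ∈ Q, ∀ b ∈ Q, ¬ (h a i + 1 = h b i ∧ h a j = h b j))
    (hav : ∀ a ∈ Q, h a j = w j → ¬ (w i ≤ h a i ∧ h a i ≤ w i + 1)) :
    (∀ a ∈ Q, h a j - w j = 0 → 0 < h a i - w i) ∨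
      (∀ a ∈ Q, h a j - w j = 0 → 0 < - (h a i - w i)) := by
  by_contra hcon
  push Not at hcon
  obtain ⟨⟨a, ha, ha1, ha2⟩, b, hb, hb1, hb2⟩ := hcon
  have hseg : ∀ t ∈ Icc (0 : ℝ) 1, a + t • (b - a) ∈ Q := fun t ht =>
    hQ.add_smul_sub_mem ha hb ht
  obtain ⟨s, hs, t, ht, h1, h2⟩ := mz_cross (fun t => h (a + t • (b - a)) i - w i)
    (fun t => h (a + t • (b - a)) j - w j) (by fun_prop) (by fun_prop) (by simpa using ha1)
    (by simpa using hb1) (by simpa using ha2) (by simpa using hb2) (by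
      intro t ht h0 h1
      exact hav _ (hseg t ht) (by linarith) ⟨by linarith [h1.1], by linarith [h1.2]⟩)
  exact hinj _ (hseg s hs) _ (hseg t ht) ⟨by linarith, by linarith⟩

theorem mz_quad (Q : Set (E 2)) (hQ : Convex ℝ Q) (u v : E 2 → ℝ) (hu : Continuous u)
    (hv : Continuous v) (h1 : ∀ a ∈ Q, v a = 0 → 0 < u a) (h2 : ∀ a ∈ Q, u a = 0 → 0 < v a)
    (a b : E 2) (ha : a ∈ Q) (hb : b ∈ Q) (hau : u a < 0) (hav : v a < 0) (hbu : 0 < u b) :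
    False := by
  obtain ⟨c, hc, hc'⟩ := hQ.isPreconnected.intermediate_value ha hb
    (f := fun z => max (u z) (v z)) (by fun_prop)
    (show (0 : ℝ) ∈ Icc _ _ from ⟨(max_lt hau hav).le, hbu.le.trans (le_max_left _ _)⟩)
  dsimp only at hc'
  rcases max_choice (u c) (v c) with h | h
  · have := h2 c hc (by linarith)
    have := le_max_right (u c) (v c)
    linarith
  · have := h1 c hc (by linarith)
    have := le_max_left (u c) (v c)
    linarith

/-- Almost convexity: the image of `Q` comes within distance one of every point `w` that has
points of the image in all four quadrants around it. -/
theorem mz_near (h : E 2 → E 2) (hc : Continuous h) (Q : Set (E 2)) (hQ : Convex ℝ Q) (w : E 2)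
    (hinj0 : ∀ a ∈ Q, ∀ b ∈ Q, ¬ (h a 0 + 1 = h b 0 ∧ h a 1 = h b 1))
    (hinj1 : ∀ a ∈ Q, ∀ b ∈ Q, ¬ (h a 1 + 1 = h b 1 ∧ h a 0 = h b 0))
    (a b c d : E 2) (ha : a ∈ Q) (hb : b ∈ Q) (hcQ : c ∈ Q) (hd : d ∈ Q)
    (ha0 : h a 0 < w 0) (ha1 : h a 1 < w 1) (hb0 : w 0 < h b 0) (hb1 : h b 1 < w 1)
    (hc0 : h c 0 < w 0) (hc1 : w 1 < h c 1) (hd0 : w 0 < h d 0) (hd1 : w 1 < h d 1) :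
    ∃ z ∈ Q, ∀ i, |h z i - w i| ≤ 1 := by
  by_contra hcon
  push Not at hcon
  have hf : ∀ z ∈ Q, ¬ (|h z 0 - w 0| ≤ 1 ∧ |h z 1 - w 1| ≤ 1) := by
    rintro z hz ⟨h0, h1⟩
    obtain ⟨i, hi⟩ := hcon z hz
    fin_cases i
    · exact absurd h0 (not_le.2 hi)
    · exact absurd h1 (not_le.2 hi)
  have s0 := mz_side h hc Q hQ 0 1 w hinj0 (by
    intro z hz h1 h2
    exact hf z hz ⟨abs_le.2 ⟨by linarith, by linarith⟩, by simp [h1]⟩)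
  have s1 := mz_side h hc Q hQ 1 0 w hinj1 (by
    intro z hz h1 h2
    exact hf z hz ⟨by simp [h1], abs_le.2 ⟨by linarith, by linarith⟩⟩)
  rcases s0 with s0 | s0 <;> rcases s1 with s1 | s1
  · exact mz_quad Q hQ (fun z => h z 0 - w 0) (fun z => h z 1 - w 1) (by fun_prop) (by fun_prop)
      s0 s1 a d ha hd (by linarith) (by linarith) (by linarith)
  · exact mz_quad Q hQ (fun z => h z 0 - w 0) (fun z => -(h z 1 - w 1)) (by fun_prop) (by fun_prop)
      (fun z hz e => s0 z hz (by linarith)) s1 c b hcQ hb (by linarith) (by linarith) (by linarith)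
  · exact mz_quad Q hQ (fun z => -(h z 0 - w 0)) (fun z => h z 1 - w 1) (by fun_prop) (by fun_prop)
      s0 (fun z hz e => s1 z hz (by linarith)) b c hb hcQ (by linarith) (by linarith) (by linarith)
  · exact mz_quad Q hQ (fun z => -(h z 0 - w 0)) (fun z => -(h z 1 - w 1)) (by fun_prop)
      (by fun_prop) (fun z hz e => s0 z hz (by linarith)) (fun z hz e => s1 z hz (by linarith))
      d a hd ha (by linarith) (by linarith) (by linarith)

theorem mz_iter_comm (F : E 2 → E 2) (m : E 2) (hm : ∀ z, F (z + m) = F z + m) (n : ℕ) (z : E 2) :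
    F^[n] (z + m) = F^[n] z + m := by
  induction n generalizing z with
  | zero => rfl
  | succ n ih => rw [Function.iterate_succ_apply, hm, ih, Function.iterate_succ_apply]

theorem mz_iter_fix (F : E 2 → E 2) (m : E 2) (hm : ∀ z, F (z + m) = F z + m) (z : E 2)
    (hz : F z = z + m) (n : ℕ) : F^[n] z = z + (n : ℝ) • m := by
  induction n with
  | zero => simp
  | succ n ih =>
    rw [Function.iterate_succ_apply, hz, mz_iter_comm F m hm, ih]
    push_cast
    rw [add_smul, one_smul, add_assoc]

theorem mz_square (F : E 2 → E 2) (hc : Continuous F) (hi : Function.Injective F)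
    (hm : ∀ z : E 2, ∀ m ∈ ZLat 2, F (z + m) = F z + m)
    (h00 : F (pt 0 0) = pt 0 0)
    (h10 : F (pt (1 / 2) 0) = pt (1 / 2) 0 + pt 0 1)
    (h01 : F (pt 0 (1 / 2)) = pt 0 (1 / 2) + pt 1 0)
    (h11 : F (pt (1 / 2) (1 / 2)) = pt (1 / 2) (1 / 2) + pt 1 1) :
    {ρ : E 2 | ρ 0 ∈ Set.Icc (0 : ℝ) 1 ∧ ρ 1 ∈ Set.Icc (0 : ℝ) 1} ⊆ rotSet F := by
  rintro ρ ⟨hρ0, hρ1⟩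
  have m01 : pt 0 1 ∈ ZLat 2 := by
    intro i; fin_cases i
    · exact ⟨0, by simp [mz_pt0]⟩
    · exact ⟨1, by simp [mz_pt1]⟩
  have m10 : pt 1 0 ∈ ZLat 2 := by
    intro i; fin_cases i
    · exact ⟨1, by simp [mz_pt0]⟩
    · exact ⟨0, by simp [mz_pt1]⟩
  have m11 : pt 1 1 ∈ ZLat 2 := by
    intro i; fin_cases i
    · exact ⟨1, by simp [mz_pt0]⟩
    · exact ⟨1, by simp [mz_pt1]⟩
  let Q : Set (E 2) := {z | (0 ≤ z 0 ∧ z 0 ≤ 1 / 2) ∧ (0 ≤ z 1 ∧ z 1 ≤ 1 / 2)}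
  have hQ : Convex ℝ Q := by
    rintro x ⟨⟨x1, x2⟩, x3, x4⟩ y ⟨⟨y1, y2⟩, y3, y4⟩ a b ha hb hab
    refine ⟨⟨?_, ?_⟩, ?_, ?_⟩ <;>
      simp only [PiLp.add_apply, PiLp.smul_apply, smul_eq_mul] <;> nlinarith
  have key : ∀ n : ℕ, ∃ z : E 2, z ∈ Q ∧
      ∀ i, |F^[n + 3] z i - (1 + ((n : ℝ) + 1) * ρ i)| ≤ 1 := by
    intro n
    have hn : (0 : ℝ) ≤ n := n.cast_nonneg
    have hN : Function.Injective F^[n + 3] := hi.iterate _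
    obtain ⟨z, hz, h⟩ := mz_near F^[n + 3] (hc.iterate _) Q hQ
      (pt (1 + ((n : ℝ) + 1) * ρ 0) (1 + ((n : ℝ) + 1) * ρ 1))
      (by
        rintro a ha b hb ⟨e0, e1⟩
        have e : F^[n + 3] (a + pt 1 0) = F^[n + 3] b := by
          rw [mz_iter_comm F _ (fun z => hm z _ m10)]
          refine mz_ext ?_ ?_
          · simpa [mz_pt0] using e0
          · simpa [mz_pt1] using e1
        have e' := congrArg (fun z : E 2 => z 0) (hN e)
        simp only [PiLp.add_apply, mz_pt0] at e'
        linarith [ha.1.1, hb.1.2])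
      (by
        rintro a ha b hb ⟨e0, e1⟩
        have e : F^[n + 3] (a + pt 0 1) = F^[n + 3] b := by
          rw [mz_iter_comm F _ (fun z => hm z _ m01)]
          refine mz_ext ?_ ?_
          · simpa [mz_pt0] using e1
          · simpa [mz_pt1] using e0
        have e' := congrArg (fun z : E 2 => z 1) (hN e)
        simp only [PiLp.add_apply, mz_pt1] at e'
        linarith [ha.2.1, hb.2.2])
      (pt 0 0) (pt 0 (1 / 2)) (pt (1 / 2) 0) (pt (1 / 2) (1 / 2))
      (by simp [Q, mz_pt0, mz_pt1]) (by simp [Q, mz_pt0, mz_pt1])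
      (by simp [Q, mz_pt0, mz_pt1]) (by simp [Q, mz_pt0, mz_pt1])
      (by
        rw [Function.iterate_fixed h00]
        simp only [mz_pt0]
        nlinarith [hρ0.1])
      (by
        rw [Function.iterate_fixed h00]
        simp only [mz_pt1]
        nlinarith [hρ1.1])
      (by
        rw [mz_iter_fix F _ (fun z => hm z _ m10) _ h01]
        simp only [mz_pt0, PiLp.add_apply, PiLp.smul_apply, smul_eq_mul]
        push_cast
        nlinarith [hρ0.2])
      (by
        rw [mz_iter_fix F _ (fun z => hm z _ m10) _ h01]
        simp only [mz_pt1, PiLp.add_apply, PiLp.smul_apply, smul_eq_mul]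
        push_cast
        nlinarith [hρ1.1])
      (by
        rw [mz_iter_fix F _ (fun z => hm z _ m01) _ h10]
        simp only [mz_pt0, PiLp.add_apply, PiLp.smul_apply, smul_eq_mul]
        push_cast
        nlinarith [hρ0.1])
      (by
        rw [mz_iter_fix F _ (fun z => hm z _ m01) _ h10]
        simp only [mz_pt1, PiLp.add_apply, PiLp.smul_apply, smul_eq_mul]
        push_cast
        nlinarith [hρ1.2])
      (by
        rw [mz_iter_fix F _ (fun z => hm z _ m11) _ h11]
        simp only [mz_pt0, PiLp.add_apply, PiLp.smul_apply, smul_eq_mul]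
        push_cast
        nlinarith [hρ0.2])
      (by
        rw [mz_iter_fix F _ (fun z => hm z _ m11) _ h11]
        simp only [mz_pt1, PiLp.add_apply, PiLp.smul_apply, smul_eq_mul]
        push_cast
        nlinarith [hρ1.2])
    refine ⟨z, hz, fun i => ?_⟩
    have := h i
    fin_cases i
    · exact this
    · exact this
  choose z hzQ hz using key
  refine ⟨fun n => n + 3, z, tendsto_add_atTop_nat 3, fun _ => mem_univ _, ?_⟩
  have hlim : Tendsto (fun n : ℕ => 4 / (((n + 3 : ℕ)) : ℝ)) atTop (𝓝 0) :=
    (tendsto_const_div_atTop_nhds_zero_nat (4 : ℝ)).comp (tendsto_add_atTop_nat 3)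
  have hρ : ∀ i, ρ i ∈ Icc (0 : ℝ) 1 := by
    intro i; fin_cases i
    · exact hρ0
    · exact hρ1
  have hzb : ∀ n i, 0 ≤ z n i ∧ z n i ≤ 1 / 2 := by
    intro n i; fin_cases i
    · exact (hzQ n).1
    · exact (hzQ n).2
  have hcoord : ∀ i, Tendsto (fun n => (((n + 3 : ℕ) : ℝ)⁻¹ • (F^[n + 3] (z n) - z n)) i) atTop
      (𝓝 (ρ i)) := by
    intro i
    rw [tendsto_iff_dist_tendsto_zero]
    refine squeeze_zero (fun _ => dist_nonneg) (fun n => ?_) hlim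
    have hpos : (0 : ℝ) < ((n + 3 : ℕ) : ℝ) := by positivity
    rw [Real.dist_eq, le_div_iff₀ hpos]
    nth_rewrite 2 [← abs_of_pos hpos]
    rw [← abs_mul]
    simp only [PiLp.sub_apply, PiLp.smul_apply, smul_eq_mul]
    rw [sub_mul, mul_comm, ← mul_assoc, mul_inv_cancel₀ hpos.ne', one_mul]
    have h1 := abs_le.1 (hz n i)
    obtain ⟨h2, h3⟩ := hzb n i
    obtain ⟨h4, h5⟩ := hρ i
    push_cast
    rw [abs_le]
    constructor <;> nlinarith [h1.1, h1.2]
  have := (tendsto_pi_nhds.2 hcoord)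
  exact ((PiLp.continuous_toLp 2 (fun _ : Fin 2 => ℝ)).tendsto _).comp this

theorem mz_torus (F : E 2 ≃ₜ E 2) (hm : ∀ z : E 2, ∀ m ∈ ZLat 2, F (z + m) = F z + m) :
    ∃ f : T 2 ≃ₜ T 2, ∀ z : E 2, tpi 2 (F z) = f (tpi 2 z) := by
  have hm' : ∀ z : E 2, ∀ m ∈ ZLat 2, F.symm (z + m) = F.symm z + m := by
    intro z m h
    apply F.injective
    rw [hm _ _ h, F.apply_symm_apply, F.apply_symm_apply]
  have lift : ∀ G : E 2 → E 2, (∀ z : E 2, ∀ m ∈ ZLat 2, G (z + m) = G z + m) → Continuous G →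
      ∃ g : T 2 → T 2, Continuous g ∧ ∀ z, g (tpi 2 z) = tpi 2 (G z) := by
    intro G hG hc
    refine ⟨Quotient.lift (fun z => tpi 2 (G z)) ?_, ?_, fun z => rfl⟩
    · intro a b hab
      have h : -a + b ∈ ZLat 2 := QuotientAddGroup.leftRel_apply.1 hab
      have e : b = a + (-a + b) := by abel
      refine QuotientAddGroup.eq.2 ?_
      rw [e, hG _ _ h]
      simpa using h
    · exact Continuous.quotient_lift (QuotientAddGroup.continuous_mk.comp hc) _
  obtain ⟨g, hg, hg'⟩ := lift F hm F.continuous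
  obtain ⟨k, hk, hk'⟩ := lift F.symm hm' F.symm.continuous
  have hsurj : ∀ x : T 2, ∃ z, tpi 2 z = x := fun x => QuotientAddGroup.mk_surjective x
  refine ⟨{ toFun := g, invFun := k, left_inv := ?_, right_inv := ?_,
            continuous_toFun := hg, continuous_invFun := hk }, fun z => (hg' z).symm⟩
  · intro x
    obtain ⟨z, rfl⟩ := hsurj x
    rw [hg', hk', F.symm_apply_apply]
  · intro x
    obtain ⟨z, rfl⟩ := hsurj x
    rw [hk', hg', F.apply_symm_apply]

theorem mz_pt_cont {X : Type*} [TopologicalSpace X] {u v : X → ℝ} (hu : Continuous u)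
    (hv : Continuous v) : Continuous fun x => pt (u x) (v x) := by
  refine (PiLp.continuous_toLp 2 (fun _ : Fin 2 => ℝ)).comp (continuous_pi fun i => ?_)
  fin_cases i
  · exact hu
  · exact hv

/-- **Misiurewicz–Ziemian type examples.**
For continuous 1-periodic `ψ₁, ψ₂` with `ψᵢ(0) = 0`, `ψᵢ(1/2) = 1`, the map
`F(x,y) = (x + ψ₂(y + ψ₁(x)), y + ψ₁(x))` is a lift of a torus homeomorphism
homotopic to the identity, the four indicated points are fixed with rotation
vectors `(0,0), (0,1), (1,0), (1,1) ∈ ρ(F)`, and by convexity `[0,1]² ⊆ ρ(F)`. -/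
theorem misiurewicz_ziemian_example
    (ψ₁ ψ₂ : ℝ → ℝ) (hc₁ : Continuous ψ₁) (hc₂ : Continuous ψ₂)
    (hp₁ : Function.Periodic ψ₁ 1) (hp₂ : Function.Periodic ψ₂ 1)
    (h₁0 : ψ₁ 0 = 0) (h₂0 : ψ₂ 0 = 0)
    (h₁half : ψ₁ (1 / 2) = 1) (h₂half : ψ₂ (1 / 2) = 1)
    (F : E 2 → E 2)
    (hF : ∀ z : E 2, F z = pt (z 0 + ψ₂ (z 1 + ψ₁ (z 0))) (z 1 + ψ₁ (z 0))) :
    IsHomeomorph F ∧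
    (∀ z : E 2, ∀ m ∈ ZLat 2, F (z + m) = F z + m) ∧
    (∃ f : T 2 ≃ₜ T 2, ∀ z : E 2, tpi 2 (F z) = f (tpi 2 z)) ∧
    F (pt 0 0) = pt 0 0 ∧
    F (pt (1 / 2) 0) = pt (1 / 2) 0 + pt 0 1 ∧
    F (pt 0 (1 / 2)) = pt 0 (1 / 2) + pt 1 0 ∧
    F (pt (1 / 2) (1 / 2)) = pt (1 / 2) (1 / 2) + pt 1 1 ∧
    pt 0 0 ∈ rotSet F ∧ pt 0 1 ∈ rotSet F ∧ pt 1 0 ∈ rotSet F ∧ pt 1 1 ∈ rotSet F ∧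
    {ρ : E 2 | ρ 0 ∈ Set.Icc (0 : ℝ) 1 ∧ ρ 1 ∈ Set.Icc (0 : ℝ) 1} ⊆ rotSet F := by
  have hFc : Continuous F := by
    rw [funext hF]
    exact mz_pt_cont (by fun_prop) (by fun_prop)
  let H : E 2 ≃ₜ E 2 :=
    { toFun := F
      invFun := fun z => pt (z 0 - ψ₂ (z 1)) (z 1 - ψ₁ (z 0 - ψ₂ (z 1)))
      left_inv := fun z => by
        rw [hF]
        simp only [mz_pt0, mz_pt1]
        exact mz_ext (by simp [mz_pt0]) (by simp [mz_pt1])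
      right_inv := fun z => by
        rw [hF]
        simp only [mz_pt0, mz_pt1]
        exact mz_ext (by simp [mz_pt0]) (by simp [mz_pt1])
      continuous_toFun := hFc
      continuous_invFun := mz_pt_cont (by fun_prop) (by fun_prop) }
  have per : ∀ ψ : ℝ → ℝ, Function.Periodic ψ 1 → ∀ (x : ℝ) (k : ℤ), ψ (x + k) = ψ x := by
    intro ψ h x k
    simpa using h.int_mul k x
  have hm : ∀ z : E 2, ∀ m ∈ ZLat 2, F (z + m) = F z + m := by
    intro z m hmem
    obtain ⟨k, hk⟩ := hmem 0
    obtain ⟨l, hl⟩ := hmem 1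
    have e : z 1 + (l : ℝ) + ψ₁ (z 0) = z 1 + ψ₁ (z 0) + l := by ring
    rw [hF, hF]
    refine mz_ext ?_ ?_
    · simp only [PiLp.add_apply, mz_pt0, hk, hl, per ψ₁ hp₁, e, per ψ₂ hp₂]
      ring
    · simp only [PiLp.add_apply, mz_pt1, hk, hl, per ψ₁ hp₁]
      ring
  have g₁ : ψ₂ 1 = 0 := by simpa [h₂0] using hp₂ 0
  have g₂ : ψ₂ (1 / 2 + 1) = 1 := by rw [hp₂, h₂half]
  have h00 : F (pt 0 0) = pt 0 0 := by
    rw [hF]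
    simp only [mz_pt0, mz_pt1, h₁0, h₂0, add_zero]
  have h10 : F (pt (1 / 2) 0) = pt (1 / 2) 0 + pt 0 1 := by
    rw [hF]
    simp only [mz_pt0, mz_pt1, h₁half, zero_add, g₁]
    exact mz_ext (by simp [mz_pt0]) (by simp [mz_pt1])
  have h01 : F (pt 0 (1 / 2)) = pt 0 (1 / 2) + pt 1 0 := by
    rw [hF]
    simp only [mz_pt0, mz_pt1, h₁0, add_zero, h₂half]
    exact mz_ext (by simp [mz_pt0]) (by simp [mz_pt1])
  have h11 : F (pt (1 / 2) (1 / 2)) = pt (1 / 2) (1 / 2) + pt 1 1 := by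
    rw [hF]
    simp only [mz_pt0, mz_pt1, h₁half, g₂]
    exact mz_ext (by simp [mz_pt0]) (by simp [mz_pt1])
  have hsq := mz_square F hFc H.injective hm h00 h10 h01 h11
  refine ⟨H.isHomeomorph, hm, mz_torus H hm, h00, h10, h01, h11,
    hsq ?_, hsq ?_, hsq ?_, hsq ?_, hsq⟩ <;> simp [mz_pt0, mz_pt1]
end
end
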